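/- arXiv:1602.05748 — 2 statements merged into one kernel-verified Lean document; each statement's English description precedes it below -/
import Mathlib

section
/- Let D be a strongly connected digraph of order n ≥ 4. If the full vertex set V(D) satisfies condition A0, then D is Hamiltonian. -/
/-!
Basic definitions for finite digraphs (no loops, no multiple arcs), where the arc
relation is `A : V → V → Prop`.  Paths and cycles are given as lists of (distinct)
vertices.
-/

variable {V : Type*}

/-- A (directed) path, given by the list of its vertices. -/
def IsPathOn (A : V → V → Prop) (l : List V) : Prop :=
  l ≠ [] ∧ l.Nodup ∧ l.Chain' A

/-- A (directed) cycle, given by the list of its vertices; its length (number of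
arcs) equals the length of the list. -/
def IsCycleOn (A : V → V → Prop) (l : List V) : Prop :=
  2 ≤ l.length ∧ l.Nodup ∧ l.Chain' A ∧
    ∀ a ∈ l.getLast?, ∀ b ∈ l.head?, A a b

/-- A directed path from `a` to `b`. -/
def IsPathFromTo (A : V → V → Prop) (l : List V) (a b : V) : Prop :=
  IsPathOn A l ∧ l.head? = some a ∧ l.getLast? = some b

/-- Out-degree `d⁺(x)`. -/
noncomputable def outDeg (A : V → V → Prop) (x : V) : ℕ := {y | A x y}.ncard

/-- In-degree `d⁻(x)`. -/
noncomputable def inDeg (A : V → V → Prop) (x : V) : ℕ := {y | A y x}.ncard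

/-- Degree `d(x) = d⁺(x) + d⁻(x)`. -/
noncomputable def deg (A : V → V → Prop) (x : V) : ℕ := outDeg A x + inDeg A x

/-- Out-degree into a set, `d⁺(x, S)`. -/
noncomputable def outDegOn (A : V → V → Prop) (x : V) (S : Set V) : ℕ :=
  {y ∈ S | A x y}.ncard

/-- In-degree from a set, `d⁻(x, S)`. -/
noncomputable def inDegOn (A : V → V → Prop) (x : V) (S : Set V) : ℕ :=
  {y ∈ S | A y x}.ncard

/-- Degree with respect to a set, `d(x, S) = d⁺(x, S) + d⁻(x, S)`. -/
noncomputable def degOn (A : V → V → Prop) (x : V) (S : Set V) : ℕ :=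
  outDegOn A x S + inDegOn A x S

/-- Two distinct vertices are adjacent if there is an arc between them in some
direction. -/
def DAdj (A : V → V → Prop) (x y : V) : Prop := A x y ∨ A y x

/-- `D` is `S`-strongly connected: between any two distinct vertices of `S` there
are directed paths in both directions. -/
def SetStronglyConnected (A : V → V → Prop) (S : Set V) : Prop :=
  ∀ x ∈ S, ∀ y ∈ S, x ≠ y → ∃ l, IsPathFromTo A l x y

/-- Strong connectivity. -/
def StronglyConnected (A : V → V → Prop) : Prop :=
  ∀ x y : V, x ≠ y → ∃ l, IsPathFromTo A l x y

/-- 2-strong connectivity: at least 3 vertices, and deleting any vertex leaves a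
strongly connected digraph. -/
def TwoStronglyConnected [Fintype V] (A : V → V → Prop) : Prop :=
  3 ≤ Fintype.card V ∧
    ∀ w x y : V, x ≠ w → y ≠ w → x ≠ y → ∃ l, IsPathFromTo A l x y ∧ w ∉ l

/-- Condition `A₀` for a set `Y` of vertices. -/
def CondA0 [Fintype V] (A : V → V → Prop) (Y : Set V) : Prop :=
  ∀ x ∈ Y, ∀ y ∈ Y, ∀ z ∈ Y,
    x ≠ y → x ≠ z → y ≠ z → ¬ DAdj A x y →
      (¬ A x z →
        deg A x + deg A y + outDeg A x + inDeg A z ≥ 3 * Fintype.card V - 2) ∧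
      (¬ A z x →
        deg A x + deg A y + inDeg A x + outDeg A z ≥ 3 * Fintype.card V - 2)

/-- A `C`-bypass: a path of length at least two whose end-vertices lie on the
cycle `c` and whose internal vertices avoid `c`. -/
def IsBypass (A : V → V → Prop) (c p : List V) : Prop :=
  IsPathOn A p ∧ 3 ≤ p.length ∧
    (∀ a ∈ p.head?, a ∈ c) ∧ (∀ b ∈ p.getLast?, b ∈ c) ∧
    ∀ v ∈ p.tail.dropLast, v ∉ c

/-- The vertex `y` can be inserted into the path `p`. -/
def CanInsert (A : V → V → Prop) (p : List V) (y : V) : Prop :=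
  ∃ i, ∃ h : i + 1 < p.length, A (p[i]'(Nat.lt_of_succ_lt h)) y ∧ A y (p[i+1]'h)

/-- A `(C, x)`-path: a path from a vertex `u` of the cycle `c` to `x`, meeting `c`
only in `u`. -/
def IsCtoXPath (A : V → V → Prop) (c l : List V) (u x : V) : Prop :=
  IsPathFromTo A l u x ∧ u ∈ c ∧ ∀ v ∈ l, v ∈ c → v = u

/-- An `(x, C)`-path: a path from `x` to a vertex `v` of the cycle `c`, meeting `c`
only in `v`. -/
def IsXtoCPath (A : V → V → Prop) (c l : List V) (x v : V) : Prop :=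
  IsPathFromTo A l x v ∧ v ∈ c ∧ ∀ w ∈ l, w ∈ c → w = v

section Counting

open Classical in
/-- The indicator of the arc `xy`. -/
noncomputable def arcInd (A : V → V → Prop) (x y : V) : ℕ := if A x y then 1 else 0

/-- The number of arcs between `x` and `y`. -/
noncomputable def arcCount (A : V → V → Prop) (x y : V) : ℕ := arcInd A x y + arcInd A y x

lemma arcInd_le_one (A : V → V → Prop) (x y : V) : arcInd A x y ≤ 1 := by
  unfold arcInd; split_ifs <;> simp

lemma arcInd_of {A : V → V → Prop} {x y : V} (h : A x y) : arcInd A x y = 1 := if_pos h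

lemma arcInd_of_not {A : V → V → Prop} {x y : V} (h : ¬ A x y) : arcInd A x y = 0 := if_neg h

lemma arcCount_le_two (A : V → V → Prop) (x y : V) : arcCount A x y ≤ 2 := by
  have h₁ := arcInd_le_one A x y
  have h₂ := arcInd_le_one A y x
  unfold arcCount; omega

lemma arcCount_of_not_dAdj {A : V → V → Prop} {x y : V} (h : ¬ DAdj A x y) :
    arcCount A x y = 0 := by
  unfold DAdj at h
  push Not at h
  simp [arcCount, arcInd_of_not h.1, arcInd_of_not h.2]

lemma arcCount_self {A : V → V → Prop} (hirr : ∀ v, ¬ A v v) (x : V) : arcCount A x x = 0 := by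
  simp [arcCount, arcInd_of_not (hirr x)]

lemma arcCount_eq_fun (A : V → V → Prop) (z : V) :
    arcCount A z = fun x => arcInd A x z + arcInd A z x :=
  funext fun _ => add_comm _ _

lemma arcInd_add_arcInd_le_one {A : V → V → Prop} {x y z w : V} (h : ¬ (A x y ∧ A z w)) :
    arcInd A x y + arcInd A z w ≤ 1 := by
  by_cases hxy : A x y
  · have hzw : ¬ A z w := fun hzw => h ⟨hxy, hzw⟩
    simp [arcInd_of_not hzw, arcInd_le_one]
  · simp [arcInd_of_not hxy, arcInd_le_one]

lemma outDeg_eq_sum [Fintype V] (A : V → V → Prop) (x : V) :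
    outDeg A x = ∑ y, arcInd A x y := by
  classical
  simp [outDeg, arcInd, Set.ncard_eq_toFinset_card']

lemma inDeg_eq_sum [Fintype V] (A : V → V → Prop) (x : V) :
    inDeg A x = ∑ y, arcInd A y x := by
  classical
  simp [inDeg, arcInd, Set.ncard_eq_toFinset_card']

lemma deg_eq_sum [Fintype V] (A : V → V → Prop) (x : V) :
    deg A x = ∑ y, arcCount A x y := by
  simp [deg, outDeg_eq_sum, inDeg_eq_sum, arcCount, Finset.sum_add_distrib]

lemma List.sum_map_le_mul_length {l : List V} {f : V → ℕ} {c : ℕ} (h : ∀ x ∈ l, f x ≤ c) :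
    (l.map f).sum ≤ c * l.length := by
  induction l with
  | nil => simp
  | cons a l ih =>
    have h₁ := h a (by simp)
    have h₂ := ih fun x hx => h x (by simp [hx])
    simp only [List.map_cons, List.sum_cons, List.length_cons, mul_add, mul_one]
    omega

lemma List.sum_map_add_le_mul_length {l : List V} {f : V → ℕ} {c : ℕ} (h : ∀ x ∈ l, f x ≤ c)
    {a : V} (ha : a ∈ l) (hfa : f a = 0) : (l.map f).sum + c ≤ c * l.length := by
  obtain ⟨s, t, rfl⟩ := List.append_of_mem ha
  have hs := List.sum_map_le_mul_length (l := s) fun x hx => h x (by simp [hx])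
  have ht := List.sum_map_le_mul_length (l := t) fun x hx => h x (by simp [hx])
  simp only [List.map_append, List.map_cons, List.sum_append, List.sum_cons, List.length_append,
    List.length_cons, mul_add, mul_one]
  omega

lemma Finset.sum_add_le_mul_card {s : Finset V} {f : V → ℕ} {c : ℕ} (h : ∀ x ∈ s, f x ≤ c)
    {a : V} (ha : a ∈ s) (hfa : f a = 0) : ∑ x ∈ s, f x + c ≤ c * s.card := by
  classical
  have h₁ : ∑ x ∈ s.erase a, f x ≤ (s.erase a).card • c :=
    Finset.sum_le_card_nsmul _ _ _ fun x hx => h x (Finset.mem_of_mem_erase hx)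
  rw [← Finset.add_sum_erase _ _ ha, hfa, zero_add]
  rw [smul_eq_mul, Finset.card_erase_of_mem ha] at h₁
  have := Finset.card_pos.2 ⟨a, ha⟩
  obtain ⟨k, hk⟩ : ∃ k, s.card = k + 1 := ⟨s.card - 1, by omega⟩
  rw [hk] at h₁ ⊢
  simp only [Nat.add_sub_cancel] at h₁
  nlinarith

lemma Finset.sum_add_two_le_card {s : Finset V} {f : V → ℕ} (h : ∀ x ∈ s, f x ≤ 1) {a b : V}
    (ha : a ∈ s) (hb : b ∈ s) (hab : a ≠ b) (hfa : f a = 0) (hfb : f b = 0) :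
    ∑ x ∈ s, f x + 2 ≤ s.card := by
  classical
  have h₁ := Finset.sum_add_le_mul_card (s := s.erase a) (f := f) (c := 1)
    (fun x hx => h x (Finset.mem_of_mem_erase hx)) (Finset.mem_erase.2 ⟨hab.symm, hb⟩) hfb
  rw [Finset.card_erase_of_mem ha] at h₁
  rw [← Finset.add_sum_erase _ _ ha, hfa, zero_add]
  have := Finset.card_pos.2 ⟨a, ha⟩
  omega

lemma List.sum_map_add_sum_compl [Fintype V] [DecidableEq V] {l : List V} (hl : l.Nodup)
    (f : V → ℕ) : (l.map f).sum + ∑ x ∈ l.toFinsetᶜ, f x = ∑ x, f x := by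
  rw [← List.sum_toFinset f hl, Finset.sum_add_sum_compl]

lemma List.sum_map_add_le_of_isChain {f g : V → ℕ} {l : List V} {s t : V}
    (h : l.IsChain fun a b => f a + g b ≤ 1) (hs : l.head? = some s) (ht : l.getLast? = some t) :
    (l.map fun x => f x + g x).sum + 1 ≤ g s + l.length + f t := by
  induction l generalizing s with
  | nil => simp at hs
  | cons a l ih =>
    obtain rfl : a = s := by simpa using hs
    cases l with
    | nil =>
      obtain rfl : a = t := by simpa using ht
      simp
      omega
    | cons b l =>
      rw [List.isChain_cons_cons] at h
      have := ih h.2 rfl (by simpa using ht)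
      simp only [List.map_cons, List.sum_cons, List.length_cons] at this ⊢
      omega

end Counting
section Cycles

variable {A : V → V → Prop}

lemma List.getLast?_append_of_eq_some {l₁ l₂ : List V} {a : V} (h : l₂.getLast? = some a) :
    (l₁ ++ l₂).getLast? = some a := by
  rw [List.getLast?_append, h, Option.some_or]

lemma List.head?_append_of_eq_some {l₁ l₂ : List V} {a : V} (h : l₁.head? = some a) :
    (l₁ ++ l₂).head? = some a := by
  rw [List.head?_append, h, Option.some_or]

lemma IsCycleOn.rotate {l₁ l₂ : List V} (h : IsCycleOn A (l₁ ++ l₂)) : IsCycleOn A (l₂ ++ l₁) := by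
  rcases eq_or_ne l₁ [] with rfl | hl₁
  · simpa using h
  rcases eq_or_ne l₂ [] with rfl | hl₂
  · simpa using h
  have hs₁ := List.head?_eq_some_head hl₁
  have hs₂ := List.head?_eq_some_head hl₂
  have ht₁ := List.getLast?_eq_some_getLast hl₁
  have ht₂ := List.getLast?_eq_some_getLast hl₂
  obtain ⟨h₁, h₂, h₃, h₄⟩ := h
  obtain ⟨h₅, h₆, h₇⟩ := List.isChain_append.1 h₃
  refine ⟨by simpa [add_comm] using h₁, List.nodup_append_comm.1 h₂,
    List.isChain_append.2 ⟨h₆, h₅, ?_⟩, ?_⟩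
  · rw [List.getLast?_append_of_eq_some ht₂, List.head?_append_of_eq_some hs₁] at h₄
    rwa [ht₂, hs₁]
  · rw [List.getLast?_append_of_eq_some ht₁, List.head?_append_of_eq_some hs₂]
    rwa [ht₁, hs₂] at h₇

/-- A cycle consisting of a path followed by another path. -/
lemma IsCycleOn.of_append {l₁ l₂ : List V} {s t x y : V} (h₁ : l₁.IsChain A) (h₂ : l₂.IsChain A)
    (hn : (l₁ ++ l₂).Nodup) (hs : l₁.head? = some s) (ht : l₁.getLast? = some t)
    (hx : l₂.head? = some x) (hy : l₂.getLast? = some y) (htx : A t x) (hys : A y s) :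
    IsCycleOn A (l₁ ++ l₂) := by
  have hl₁ : l₁ ≠ [] := by rintro rfl; simp at hs
  have hl₂ : l₂ ≠ [] := by rintro rfl; simp at hx
  refine ⟨?_, hn, List.isChain_append.2 ⟨h₁, h₂, ?_⟩, ?_⟩
  · have := List.length_pos_iff.2 hl₁
    have := List.length_pos_iff.2 hl₂
    simp; omega
  · intro a ha b hb
    simp_all
  · intro a ha b hb
    simp_all [List.getLast?_append, List.head?_append]

lemma not_perm_append_of_length_le {l X : List V} (hX : X ≠ [])
    (hmax : ∀ c, IsCycleOn A c → c.length ≤ l.length) (c : List V) (hc : IsCycleOn A c) :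
    ¬ c.Perm (l ++ X) := by
  intro h
  have h₁ := hmax c hc
  have h₂ := h.length_eq
  have h₃ := List.length_pos_iff.2 hX
  rw [List.length_append] at h₂
  omega

/-- If a path outside of a cycle cannot be included into the cycle, then it does not join two
consecutive vertices of the cycle. -/
lemma IsCycleOn.not_detour {l X : List V} {s t : V} (hl : IsCycleOn A l)
    (hmax : ∀ c, IsCycleOn A c → ¬ c.Perm (l ++ X)) (hX : X.IsChain A) (hn : (l ++ X).Nodup)
    (hs : X.head? = some s) (ht : X.getLast? = some t) :
    (l.IsChain fun a b => ¬ (A a s ∧ A t b)) ∧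
      ∀ a ∈ l.getLast?, ∀ b ∈ l.head?, ¬ (A a s ∧ A t b) := by
  have key : ∀ c, IsCycleOn A c → c.Perm l → ∀ a ∈ c.getLast?, ∀ b ∈ c.head?,
      ¬ (A a s ∧ A t b) := by
    rintro c hc hp a ha b hb ⟨h₁, h₂⟩
    exact hmax _ (IsCycleOn.of_append hc.2.2.1 hX ((hp.append_right X).nodup_iff.2 hn)
      hb ha hs ht h₁ h₂) (hp.append_right X)
  refine ⟨List.isChain_iff_forall_rel_of_append_cons_cons.2 ?_, key l hl (.refl _)⟩
  intro a b l₁ l₂ h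
  have hc : IsCycleOn A ((b :: l₂) ++ (l₁ ++ [a])) := by
    apply IsCycleOn.rotate
    rw [h] at hl
    simpa using hl
  refine key _ hc ?_ a (List.getLast?_append_of_eq_some (List.getLast?_append_of_eq_some rfl))
    b (by simp)
  rw [h]
  exact List.perm_append_comm.trans (by simp)

lemma IsCycleOn.sum_detour_le {l X : List V} {s t : V} (hl : IsCycleOn A l)
    (hmax : ∀ c, IsCycleOn A c → ¬ c.Perm (l ++ X)) (hX : X.IsChain A) (hn : (l ++ X).Nodup)
    (hs : X.head? = some s) (ht : X.getLast? = some t) :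
    (l.map fun x => arcInd A x s + arcInd A t x).sum ≤ l.length := by
  obtain ⟨h₁, h₂⟩ := hl.not_detour hmax hX hn hs ht
  have hne : l ≠ [] := by rintro rfl; simpa using hl.1
  have h₃ := List.sum_map_add_le_of_isChain (f := fun x => arcInd A x s)
    (g := fun x => arcInd A t x) (h₁.imp fun a b h => arcInd_add_arcInd_le_one h)
    (List.head?_eq_some_head hne) (List.getLast?_eq_some_getLast hne)
  have h₄ := arcInd_add_arcInd_le_one (h₂ _ (List.getLast?_eq_some_getLast hne) _
    (List.head?_eq_some_head hne))
  omega

lemma IsCycleOn.sum_arcCount_le {l : List V} {z : V} (hl : IsCycleOn A l)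
    (hmax : ∀ c, IsCycleOn A c → ¬ c.Perm (l ++ [z])) (hz : z ∉ l) :
    (l.map (arcCount A z)).sum ≤ l.length := by
  have := hl.sum_detour_le hmax (X := [z]) (s := z) (t := z) (by simp)
    (by simpa [List.nodup_append, hl.2.1] using fun a ha (h : a = z) => hz (h ▸ ha)) rfl rfl
  rwa [← arcCount_eq_fun] at this

/-- A vertex that cannot be inserted into a path has few arcs to it. -/
lemma sum_arcCount_le_of_not_insert {l : List V} {z : V} (hne : l ≠ [])
    (h : l.IsChain fun a b => ¬ (A a z ∧ A z b)) :
    (l.map (arcCount A z)).sum ≤ l.length + 1 := by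
  have h₃ := List.sum_map_add_le_of_isChain (f := fun x => arcInd A x z)
    (g := fun x => arcInd A z x) (h.imp fun a b h => arcInd_add_arcInd_le_one h)
    (List.head?_eq_some_head hne) (List.getLast?_eq_some_getLast hne)
  have h₄ := arcInd_le_one A (l.getLast hne) z
  have h₅ := arcInd_le_one A z (l.head hne)
  rw [← arcCount_eq_fun] at h₃
  omega

end Cycles
section Detours

/-- Reachability through vertices of `S` only. -/
def ReachIn (A : V → V → Prop) (S : Set V) : V → V → Prop :=
  Relation.ReflTransGen fun a b => A a b ∧ a ∈ S ∧ b ∈ S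

/-- There is a nontrivial path from `u` to `z` whose vertices, except possibly `z`, lie in `S`. -/
def ExitsTo (A : V → V → Prop) (S : Set V) (u z : V) : Prop :=
  ∃ x ∈ S, ReachIn A S u x ∧ A x z

/-- There is a nontrivial path from `z` to `u` whose vertices, except possibly `z`, lie in `S`. -/
def EntersFrom (A : V → V → Prop) (S : Set V) (u z : V) : Prop :=
  ∃ x ∈ S, A z x ∧ ReachIn A S x u

variable {A : V → V → Prop}

lemma ReachIn.exists_path {S : Set V} {a b : V} (h : ReachIn A S a b) (hb : b ∈ S) :
    ∃ l : List V, l.IsChain A ∧ l.Nodup ∧ l.head? = some a ∧ l.getLast? = some b ∧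
      ∀ x ∈ l, x ∈ S := by
  induction h using Relation.ReflTransGen.head_induction_on with
  | refl => exact ⟨[b], by simp, by simp, rfl, rfl, by simpa using hb⟩
  | @head a c hac _ ih =>
    obtain ⟨l, h₁, h₂, h₃, h₄, h₅⟩ := ih
    by_cases hal : a ∈ l
    · obtain ⟨s, t, rfl⟩ := List.append_of_mem hal
      refine ⟨a :: t, (List.isChain_append.1 h₁).2.1, (List.nodup_append.1 h₂).2.1, rfl, ?_,
        fun x hx => h₅ x (by simp only [List.mem_append]; exact Or.inr hx)⟩
      rw [List.getLast?_append] at h₄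
      rwa [List.getLast?_eq_some_getLast (List.cons_ne_nil a t), Option.some_or, ←
        List.getLast?_eq_some_getLast (List.cons_ne_nil a t)] at h₄
    · refine ⟨a :: l, ?_, List.nodup_cons.2 ⟨hal, h₂⟩, rfl, ?_, ?_⟩
      · rw [List.isChain_cons]
        refine ⟨fun y hy => ?_, h₁⟩
        obtain rfl : c = y := by simpa [h₃] using hy
        exact hac.1
      · exact List.getLast?_append_of_eq_some (l₁ := [a]) h₄
      · rintro x (_ | ⟨_, hx⟩)
        exacts [hac.2.1, h₅ x hx]

lemma exists_exitsTo {S : Set V} {u c : V} (h : Relation.ReflTransGen A u c) (hu : u ∈ S)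
    (hc : c ∉ S) : ∃ z, z ∉ S ∧ ExitsTo A S u z := by
  induction h using Relation.ReflTransGen.head_induction_on with
  | refl => exact absurd hu hc
  | @head a b hab _ ih =>
    by_cases hb : b ∈ S
    · obtain ⟨z, hz, x, hx, hbx, hxz⟩ := ih hb
      exact ⟨z, hz, x, hx, hbx.head ⟨hab, hu, hb⟩, hxz⟩
    · exact ⟨b, hb, a, hu, .refl, hab⟩

lemma exists_entersFrom {S : Set V} {u c : V} (h : Relation.ReflTransGen A c u) (hu : u ∈ S)
    (hc : c ∉ S) : ∃ z, z ∉ S ∧ EntersFrom A S u z := by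
  induction h with
  | refl => exact absurd hu hc
  | @tail a b _ hab ih =>
    by_cases ha : a ∈ S
    · obtain ⟨z, hz, x, hx, hzx, hxa⟩ := ih ha
      exact ⟨z, hz, x, hx, hzx, hxa.tail ⟨hab, ha, hu⟩⟩
    · exact ⟨a, ha, b, hu, hab, .refl⟩

/-- A segment of a cycle starting at a vertex satisfying `P` and ending at a vertex satisfying `Q`
can be extended until the rest of the cycle has no vertex satisfying `P` or `Q`. -/
lemma IsCycleOn.exists_maximal_segment {P Q : V → Prop} {B G : List V} {s t : V}
    (hc : IsCycleOn A (B ++ G)) (hs : B.head? = some s) (hP : P s) (ht : B.getLast? = some t)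
    (hQ : Q t) : ∃ B' G' : List V, ∃ s' t' : V, IsCycleOn A (B' ++ G') ∧
      (B' ++ G').Perm (B ++ G) ∧ G' ⊆ G ∧ B'.head? = some s' ∧ P s' ∧ B'.getLast? = some t' ∧
      Q t' ∧ ∀ g ∈ G', ¬ P g ∧ ¬ Q g := by
  induction hk : G.length using Nat.strong_induction_on generalizing B G s t with
  | _ k ih =>
    subst hk
    by_cases hG : ∀ g ∈ G, ¬ P g ∧ ¬ Q g
    · exact ⟨B, G, s, t, hc, .refl _, fun _ h => h, hs, hP, ht, hQ, hG⟩
    push Not at hG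
    obtain ⟨g, hg, hPQ⟩ := hG
    obtain ⟨G₁, G₂, rfl⟩ := List.append_of_mem hg
    by_cases hgP : P g
    · have hc' : IsCycleOn A ((g :: G₂ ++ B) ++ G₁) := by
        have : IsCycleOn A ((B ++ G₁) ++ (g :: G₂)) := by simpa using hc
        simpa using this.rotate
      obtain ⟨B', G', s', t', h₁, h₂, h₃, h₄⟩ := ih G₁.length (by simp) hc' rfl hgP
        (List.getLast?_append_of_eq_some ht) hQ rfl
      refine ⟨B', G', s', t', h₁, h₂.trans ?_, fun x hx => by simp [h₃ hx], h₄⟩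
      rw [List.append_assoc]
      exact List.perm_append_comm.trans (by simp)
    · have hc' : IsCycleOn A ((B ++ G₁ ++ [g]) ++ G₂) := by simpa using hc
      obtain ⟨B', G', s', t', h₁, h₂, h₃, h₄⟩ := ih G₂.length (by simp; omega) hc'
        (List.head?_append_of_eq_some (List.head?_append_of_eq_some hs)) hP
        (List.getLast?_append_of_eq_some rfl) (hPQ hgP) rfl
      exact ⟨B', G', s', t', h₁, h₂.trans (by simp), fun x hx => by simp [h₃ hx], h₄⟩

/-- The path `p` arises from the path `B` by inserting vertices of `G`. -/
structure IsInsertion (A : V → V → Prop) (B G p : List V) : Prop where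
  isChain : p.IsChain A
  nodup : p.Nodup
  subset : B ⊆ p
  subset_append : p ⊆ B ++ G
  head? : p.head? = B.head?
  getLast? : p.getLast? = B.getLast?
  pairwise : ∀ R : V → V → Prop, (∀ g ∈ G, ∀ x, R g x ∧ R x g) → B.Pairwise R → p.Pairwise R

lemma IsInsertion.insert {B G l₁ l₂ : List V} {a b z : V}
    (h : IsInsertion A B G (l₁ ++ a :: b :: l₂)) (hzG : z ∈ G) (hz : z ∉ l₁ ++ a :: b :: l₂)
    (haz : A a z) (hzb : A z b) : IsInsertion A B G (l₁ ++ a :: z :: b :: l₂) where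
  isChain := by
    have := h.isChain
    simp only [List.isChain_append, List.isChain_cons_cons, List.head?_cons] at this ⊢
    tauto
  nodup := by
    have := h.nodup
    have hp : (l₁ ++ a :: z :: b :: l₂).Perm (z :: (l₁ ++ a :: b :: l₂)) := by
      simpa using List.perm_middle (l₁ := l₁ ++ [a]) (a := z) (l₂ := b :: l₂)
    exact hp.nodup_iff.2 (List.nodup_cons.2 ⟨hz, this⟩)
  subset := fun x hx => by
    have := h.subset hx
    simp at this ⊢
    tauto
  subset_append := fun x hx => by
    have := @h.subset_append x
    simp at this hx ⊢
    grind
  head? := by rw [← h.head?]; cases l₁ <;> rfl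
  getLast? := by rw [← h.getLast?]; simp [List.getLast?_append, List.getLast?_cons_cons]
  pairwise := fun R hR hB => by
    have := h.pairwise R hR hB
    have h₁ := fun x => (hR z hzG x).1
    have h₂ := fun x => (hR z hzG x).2
    simp only [List.pairwise_append, List.pairwise_cons, List.mem_cons] at this ⊢
    grind

lemma exists_isInsertion_maximal [Fintype V] {B G : List V} (hB : B.IsChain A)
    (hn : (B ++ G).Nodup) : ∃ p, IsInsertion A B G p ∧
      ∀ z ∈ G, z ∉ p → p.IsChain fun a b => ¬ (A a z ∧ A z b) := by
  have h₀ : IsInsertion A B G B :=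
    ⟨hB, (List.nodup_append.1 hn).1, fun _ h => h, fun _ h => by simp [h], rfl, rfl,
      fun _ _ h => h⟩
  obtain ⟨p, hp, hmax⟩ : ∃ p, IsInsertion A B G p ∧
      ∀ p', IsInsertion A B G p' → p'.length ≤ p.length := by
    by_contra! hcon
    have : ∀ k, ∃ p, IsInsertion A B G p ∧ k ≤ p.length := by
      intro k
      induction k with
      | zero => exact ⟨B, h₀, Nat.zero_le _⟩
      | succ k ih =>
        obtain ⟨p, hp, hk⟩ := ih
        obtain ⟨p', hp', hk'⟩ := hcon p hp
        exact ⟨p', hp', by omega⟩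
    obtain ⟨p, hp, hk⟩ := this (Fintype.card V + 1)
    have := hp.nodup.length_le_card
    omega
  refine ⟨p, hp, fun z hzG hz => List.isChain_iff_forall_rel_of_append_cons_cons.2 ?_⟩
  rintro a b l₁ l₂ rfl ⟨h₁, h₂⟩
  have := hmax _ (hp.insert hzG hz h₁ h₂)
  simp at this

end Detours
section BadPairs

variable [Fintype V] {A : V → V → Prop}

/-- A nonadjacent pair violating Meyniel's degree condition. -/
structure IsBadPair (A : V → V → Prop) (x y : V) : Prop where
  ne : x ≠ y
  not_dAdj : ¬ DAdj A x y
  deg_add_deg_le : deg A x + deg A y + 2 ≤ 2 * Fintype.card V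

lemma IsBadPair.symm {x y : V} (h : IsBadPair A x y) : IsBadPair A y x :=
  ⟨h.ne.symm, fun h' => h.not_dAdj (Or.symm h'), by have := h.deg_add_deg_le; omega⟩

lemma CondA0.le_out (hA0 : CondA0 A Set.univ) {x y z : V} (hxy : IsBadPair A x y) (hz : z ≠ x)
    (hzy : z ≠ y) (hxz : ¬ A x z) :
    3 * Fintype.card V ≤ deg A x + deg A y + outDeg A x + inDeg A z + 2 := by
  have := (hA0 x trivial y trivial z trivial hxy.ne hz.symm hzy.symm hxy.not_dAdj).1 hxz
  omega

lemma CondA0.le_in (hA0 : CondA0 A Set.univ) {x y z : V} (hxy : IsBadPair A x y) (hz : z ≠ x)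
    (hzy : z ≠ y) (hzx : ¬ A z x) :
    3 * Fintype.card V ≤ deg A x + deg A y + inDeg A x + outDeg A z + 2 := by
  have := (hA0 x trivial y trivial z trivial hxy.ne hz.symm hzy.symm hxy.not_dAdj).2 hzx
  omega

lemma CondA0.le_deg (hA0 : CondA0 A Set.univ) {x y z : V} (hxy : IsBadPair A x y) (hz : z ≠ x)
    (hzy : z ≠ y) (hxz : ¬ DAdj A x z) :
    6 * Fintype.card V ≤ 3 * deg A x + 2 * deg A y + deg A z + 4 := by
  have h₁ := hA0.le_out hxy hz hzy fun h => hxz (Or.inl h)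
  have h₂ := hA0.le_in hxy hz hzy fun h => hxz (Or.inr h)
  have h₃ : deg A x = outDeg A x + inDeg A x := rfl
  have h₄ : deg A z = outDeg A z + inDeg A z := rfl
  omega

lemma IsBadPair.unique (hA0 : CondA0 A Set.univ) {x y z : V} (hxy : IsBadPair A x y)
    (hxz : IsBadPair A x z) : y = z := by
  by_contra hyz
  have h₁ := hA0.le_deg hxy hxz.ne.symm (Ne.symm hyz) hxz.not_dAdj
  have h₂ := hxy.deg_add_deg_le
  have h₃ := hxz.deg_add_deg_le
  have : 0 < Fintype.card V := Fintype.card_pos_iff.2 ⟨x⟩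
  omega

/-- If a segment `B` of a longest cycle starts and ends at vertices linked to `w` outside of the
cycle, and the rest `G` of the cycle is not linked to `w`, then every vertex of `G` that cannot be
inserted into `B` forms a bad pair with `w`. -/
lemma IsInsertion.isBadPair (hirr : ∀ v, ¬ A v v) {B G p : List V} (hc : IsCycleOn A (B ++ G))
    (hmax : ∀ c, IsCycleOn A c → c.length ≤ (B ++ G).length) (hp : IsInsertion A B G p)
    (hpmax : ∀ z ∈ G, z ∉ p → p.IsChain fun a b => ¬ (A a z ∧ A z b)) (hB : B ≠ []) {w q : V}
    (hw : w ∉ B ++ G)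
    (hout : ∀ g ∈ G, ¬ ExitsTo A {v | v ∉ B ++ G} w g)
    (hin : ∀ g ∈ G, ¬ EntersFrom A {v | v ∉ B ++ G} w g) (hq : q ∈ G) (hqp : q ∉ p) :
    IsBadPair A w q := by
  classical
  have hadj : ∀ g ∈ G, ¬ DAdj A w g := by
    rintro g hg (h | h)
    · exact hout g hg ⟨w, hw, .refl, h⟩
    · exact hin g hg ⟨w, hw, h, .refl⟩
  refine ⟨?_, hadj q hq, ?_⟩
  · rintro rfl
    exact hw (by simp [hq])
  set Q := G.filter (· ∉ p) with hQ
  have hGn : G.Nodup := (List.nodup_append.1 hc.2.1).2.1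
  have hpQ : (p ++ Q).Nodup := by
    refine List.nodup_append.2 ⟨hp.nodup, hGn.filter _, ?_⟩
    rintro a ha b hb rfl
    simp [hQ, ha] at hb
  have hperm : (p ++ Q).Perm (B ++ G) := by
    refine (List.perm_ext_iff_of_nodup hpQ hc.2.1).2 fun a => ?_
    have h₁ := @hp.subset a
    have h₂ := @hp.subset_append a
    simp only [List.mem_append, hQ, List.mem_filter, decide_eq_true_eq] at *
    tauto
  have hlen := hperm.length_eq
  have hsplit : ∀ v, deg A v = (p.map (arcCount A v)).sum + (Q.map (arcCount A v)).sum +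
      ∑ x ∈ (B ++ G).toFinsetᶜ, arcCount A v x := by
    intro v
    rw [deg_eq_sum, ← List.sum_map_add_sum_compl hc.2.1, ← (hperm.map _).sum_eq, List.map_append,
      List.sum_append]
  have hqQ : q ∈ Q := by simp [hQ, hq, hqp]
  have h₁ : (p.map (arcCount A q)).sum ≤ p.length + 1 :=
    sum_arcCount_le_of_not_insert (by
      rintro rfl
      exact hB (List.subset_nil.1 hp.subset)) (hpmax q hq hqp)
  have h₂ : (Q.map (arcCount A q)).sum + 2 ≤ 2 * Q.length :=
    List.sum_map_add_le_mul_length (fun x _ => arcCount_le_two A q x) hqQ (arcCount_self hirr q)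
  have h₃ : (p.map (arcCount A w)).sum + (Q.map (arcCount A w)).sum ≤ B.length + 1 := by
    have h₄ : (G.map (arcCount A w)).sum = 0 := by
      have := List.sum_map_le_mul_length (l := G) (f := arcCount A w) (c := 0)
        fun x hx => (arcCount_of_not_dAdj (hadj x hx)).le
      omega
    rw [← List.sum_append, ← List.map_append, (hperm.map _).sum_eq, List.map_append,
      List.sum_append, h₄, add_zero]
    refine sum_arcCount_le_of_not_insert hB ?_
    have := (hc.not_detour (X := [w])
      (not_perm_append_of_length_le (by simp) hmax) (s := w) (t := w) (by simp)
      ((List.perm_append_singleton w _).nodup_iff.2 (List.nodup_cons.2 ⟨hw, hc.2.1⟩)) rfl rfl).1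
    exact (List.isChain_append.1 this).1
  have h₅ : ∑ x ∈ (B ++ G).toFinsetᶜ, (arcCount A w x + arcCount A q x) + 2 ≤
      2 * (B ++ G).toFinsetᶜ.card := by
    refine Finset.sum_add_le_mul_card (a := w) (fun x hx => ?_) (by simpa using hw) ?_
    · have hx' : x ∉ B ++ G := by simpa using hx
      have h₆ : ¬ (A w x ∧ A x q) := fun h =>
        hout q hq ⟨x, hx', .single ⟨h.1, hw, hx'⟩, h.2⟩
      have h₇ : ¬ (A q x ∧ A x w) := fun h =>
        hin q hq ⟨x, hx', h.1, .single ⟨h.2, hx', hw⟩⟩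
      have h₈ := arcInd_add_arcInd_le_one h₆
      have h₉ := arcInd_add_arcInd_le_one h₇
      unfold arcCount
      omega
    · rw [arcCount_self hirr, arcCount_of_not_dAdj fun h => hadj q hq (Or.symm h)]
  rw [Finset.card_compl, List.toFinset_card_of_nodup hc.2.1, Finset.sum_add_distrib] at h₅
  rw [hsplit w, hsplit q]
  have h₆ : (B ++ G).length ≤ Fintype.card V := hc.2.1.length_le_card
  have h₇ : B.length ≤ p.length := ((List.nodup_append.1 hc.2.1).1.subperm hp.subset).length_le
  simp only [List.length_append] at *
  omega

/-- The part of a longest cycle avoided by a detour through an outside vertex `u` contains exactly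
one vertex that cannot be absorbed by the rest of the cycle, and this vertex forms a bad pair with
`u`. -/
lemma IsCycleOn.exists_badPair (hirr : ∀ v, ¬ A v v) (hA0 : CondA0 A Set.univ) {B G : List V}
    (hc : IsCycleOn A (B ++ G)) (hmax : ∀ c, IsCycleOn A c → c.length ≤ (B ++ G).length)
    {u s t : V} (hu : u ∉ B ++ G) (hs : B.head? = some s) (ht : B.getLast? = some t)
    (hus : ExitsTo A {v | v ∉ B ++ G} u s) (htu : EntersFrom A {v | v ∉ B ++ G} u t)
    (hout : ∀ g ∈ G, ¬ ExitsTo A {v | v ∉ B ++ G} u g)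
    (hin : ∀ g ∈ G, ¬ EntersFrom A {v | v ∉ B ++ G} u g) :
    ∃ p y, IsInsertion A B G p ∧ y ∈ G ∧ y ∉ p ∧ (p ++ [y]).Perm (B ++ G) ∧
      ∀ w, w ∉ B ++ G → ReachIn A {v | v ∉ B ++ G} u w → ReachIn A {v | v ∉ B ++ G} w u →
        IsBadPair A w y := by
  classical
  have hB : B ≠ [] := by rintro rfl; simp at hs
  obtain ⟨p, hp, hpmax⟩ := exists_isInsertion_maximal (G := G) (List.isChain_append.1 hc.2.2.1).1
    hc.2.1
  have hbad : ∀ q ∈ G, q ∉ p → ∀ w, w ∉ B ++ G → ReachIn A {v | v ∉ B ++ G} u w →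
      ReachIn A {v | v ∉ B ++ G} w u → IsBadPair A w q := by
    intro q hq hqp w hw huw hwu
    refine hp.isBadPair hirr hc hmax hpmax hB hw ?_ ?_ hq hqp
    · rintro g hg ⟨x, hx, hwx, hxg⟩
      exact hout g hg ⟨x, hx, huw.trans hwx, hxg⟩
    · rintro g hg ⟨x, hx, hgx, hxw⟩
      exact hin g hg ⟨x, hx, hgx, hxw.trans hwu⟩
  have hGn : G.Nodup := (List.nodup_append.1 hc.2.1).2.1
  have hperm : (p ++ G.filter (· ∉ p)).Perm (B ++ G) := by
    refine (List.perm_ext_iff_of_nodup (List.nodup_append.2 ⟨hp.nodup, hGn.filter _, ?_⟩)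
      hc.2.1).2 fun a => ?_
    · rintro a ha b hb rfl
      simp [ha] at hb
    · have h₁ := @hp.subset a
      have h₂ := @hp.subset_append a
      simp only [List.mem_append, List.mem_filter, decide_eq_true_eq] at *
      tauto
  rcases hQ : G.filter (· ∉ p) with _ | ⟨y, Q⟩
  · exfalso
    obtain ⟨x, hx, hux, hxs⟩ := hus
    obtain ⟨z, hz, htz, hzu⟩ := htu
    obtain ⟨X, h₁, h₂, h₃, h₄, h₅⟩ := ReachIn.exists_path (hzu.trans hux) hx
    rw [hQ, List.append_nil] at hperm
    have hcX : IsCycleOn A (p ++ X) := by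
      refine IsCycleOn.of_append hp.isChain h₁ (List.nodup_append.2 ⟨hp.nodup, h₂, ?_⟩)
        (hp.head?.trans hs) (hp.getLast?.trans ht) h₃ h₄ htz hxs
      rintro a ha b hb rfl
      exact h₅ a hb (hp.subset_append ha)
    have h₆ := hmax _ hcX
    have h₇ := hperm.length_eq
    have h₈ : 0 < X.length := List.length_pos_iff.2 (by rintro rfl; simp at h₃)
    rw [List.length_append] at h₆
    omega
  · have hmem : ∀ q ∈ y :: Q, q ∈ G ∧ q ∉ p := fun q hq => by
      rw [← hQ] at hq
      simpa using hq
    have hy := hmem y (by simp)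
    rcases Q with _ | ⟨y', Q⟩
    · exact ⟨p, y, hp, hy.1, hy.2, hQ ▸ hperm, hbad y hy.1 hy.2⟩
    · exfalso
      have hy' := hmem y' (by simp)
      have hne := IsBadPair.unique hA0 (hbad y hy.1 hy.2 u hu .refl .refl)
        (hbad y' hy'.1 hy'.2 u hu .refl .refl)
      have : (y :: y' :: Q).Nodup := hQ ▸ hGn.filter _
      simp [hne] at this

/-- A detour through an outside vertex `u` of a longest cycle yields a vertex `y` of the avoided part
of the cycle that forms a bad pair with `u`, and the other vertices of the cycle can be arranged
into a path along a detour through `u`. -/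
lemma IsCycleOn.exists_badPair_of_detour (hirr : ∀ v, ¬ A v v) (hA0 : CondA0 A Set.univ)
    {B G l : List V} (hc : IsCycleOn A (B ++ G)) (hl : (B ++ G).Perm l)
    (hmax : ∀ c, IsCycleOn A c → c.length ≤ l.length)
    {u s t : V} (hu : u ∉ l) (hs : B.head? = some s) (ht : B.getLast? = some t)
    (hus : ExitsTo A {v | v ∉ l} u s) (htu : EntersFrom A {v | v ∉ l} u t) :
    ∃ B' G' p : List V, ∃ s' t' y : V, IsCycleOn A (B' ++ G') ∧ (B' ++ G').Perm l ∧ y ∈ G' ∧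
      G' ⊆ G ∧ (∀ g ∈ G', ¬ DAdj A u g) ∧ IsInsertion A B' G' p ∧ (p ++ [y]).Perm l ∧
      p.head? = some s' ∧ ExitsTo A {v | v ∉ l} u s' ∧
      p.getLast? = some t' ∧ EntersFrom A {v | v ∉ l} u t' ∧
      ∀ w, w ∉ l → ReachIn A {v | v ∉ l} u w → ReachIn A {v | v ∉ l} w u → IsBadPair A w y := by
  obtain ⟨B', G', s', t', h₁, h₂, h₃, h₄, h₅, h₆, h₇, h₈⟩ :=
    hc.exists_maximal_segment hs hus ht htu
  have hl' := h₂.trans hl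
  have hS : {v | v ∉ l} = {v | v ∉ B' ++ G'} := by
    ext v
    simp only [Set.mem_ofPred_eq, hl'.mem_iff]
  rw [hS] at h₅ h₇ h₈ ⊢
  rw [← hl'.length_eq] at hmax
  rw [← hl'.mem_iff] at hu
  obtain ⟨p, y, h₉, h₁₀, -, h₁₂, h₁₃⟩ := h₁.exists_badPair hirr hA0 hmax hu h₄ h₆ h₅ h₇
    (fun g hg => (h₈ g hg).1) fun g hg => (h₈ g hg).2
  refine ⟨B', G', p, s', t', y, h₁, hl', h₁₀, h₃, ?_, h₉, h₁₂.trans hl', h₉.head?.trans h₄, h₅,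
    h₉.getLast?.trans h₆, h₇, fun w hw => h₁₃ w (by rwa [hl'.mem_iff])⟩
  rintro g hg (h | h)
  · exact (h₈ g hg).1 ⟨u, hu, .refl, h⟩
  · exact (h₈ g hg).2 ⟨u, hu, h, .refl⟩

omit [Fintype V] in
lemma StronglyConnected.reflTransGen {A : V → V → Prop} (h : StronglyConnected A) (x y : V) :
    Relation.ReflTransGen A x y := by
  rcases eq_or_ne x y with rfl | hxy
  · exact .refl
  obtain ⟨l, ⟨hne, -, hl⟩, hx, hy⟩ := h x y hxy
  have := List.relationReflTransGen_of_exists_isChain l hl hne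
  rwa [(List.head_eq_iff_head?_eq_some hne).2 hx,
    (List.getLast_eq_iff_getLast?_eq_some hne).2 hy] at this

omit [Fintype V] in
lemma IsCycleOn.exists_segment {l : List V} (hconn : StronglyConnected A) (hl : IsCycleOn A l)
    {u : V} (hu : u ∉ l) : ∃ B G : List V, ∃ s t : V, IsCycleOn A (B ++ G) ∧ (B ++ G).Perm l ∧
      B.head? = some s ∧ B.getLast? = some t ∧ ExitsTo A {v | v ∉ l} u s ∧
      EntersFrom A {v | v ∉ l} u t := by
  obtain ⟨c, hc⟩ : ∃ c, c ∈ l :=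
    List.exists_mem_of_ne_nil l (by rintro rfl; simpa using hl.1)
  have hc' : c ∉ {v | v ∉ l} := by simpa using hc
  obtain ⟨s, hs, hus⟩ := exists_exitsTo (hconn.reflTransGen u c) hu hc'
  obtain ⟨t, ht, htu⟩ := exists_entersFrom (hconn.reflTransGen c u) hu hc'
  simp only [Set.mem_ofPred_eq, not_not] at hs ht
  obtain ⟨l₁, l₂, rfl⟩ := List.append_of_mem hs
  have hrot := hl.rotate
  have hperm : (s :: l₂ ++ l₁).Perm (l₁ ++ s :: l₂) := List.perm_append_comm
  obtain ⟨B, G, hBG⟩ := List.append_of_mem (hperm.mem_iff.2 ht)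
  rw [hBG] at hperm hrot
  refine ⟨B ++ [t], G, s, t, by simpa using hrot, by simpa using hperm, ?_,
    List.getLast?_append_of_eq_some rfl, hus, htu⟩
  cases B <;> simp_all

/-- Under condition `A₀`, a longest cycle misses at most one vertex. -/
lemma IsCycleOn.eq_of_not_mem (hirr : ∀ v, ¬ A v v) (hA0 : CondA0 A Set.univ)
    (hconn : StronglyConnected A) {l : List V} (hl : IsCycleOn A l)
    (hmax : ∀ c, IsCycleOn A c → c.length ≤ l.length) {u w : V} (hu : u ∉ l) (hw : w ∉ l) :
    w = u := by
  classical
  set S : Set V := {v | v ∉ l} with hS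
  have hbad : ∀ v, v ∉ l → ∃ y ∈ l, ∀ x, x ∉ l → ReachIn A S v x → ReachIn A S x v →
      IsBadPair A x y := by
    intro v hv
    obtain ⟨B, G, s, t, h₁, h₂, h₃, h₄, h₅, h₆⟩ := hl.exists_segment hconn hv
    obtain ⟨B', G', p, s', t', y, h₇, h₈, h₉, -, -, -, -, -, -, -, -, h⟩ :=
      h₁.exists_badPair_of_detour hirr hA0 h₂ hmax hv h₃ h₄ h₅ h₆
    exact ⟨y, h₈.mem_iff.1 (by simp [h₉]), h⟩
  have hacyc : ∀ v x, v ∉ l → x ∉ l → ReachIn A S v x → ReachIn A S x v → v = x := by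
    intro v x hv hx hvx hxv
    obtain ⟨y, -, hy⟩ := hbad v hv
    exact (hy v hv .refl .refl).symm.unique hA0 (hy x hx hvx hxv).symm
  obtain ⟨y, hyl, hy⟩ := hbad u hu
  replace hy := hy u hu .refl .refl
  by_contra hwu
  have hwy : w ≠ y := by rintro rfl; exact hw hyl
  have hcard : (l.toFinsetᶜ).card + l.length = Fintype.card V := by
    have := hl.2.1.length_le_card
    rw [Finset.card_compl, List.toFinset_card_of_nodup hl.2.1]
    omega
  have hloop : ∀ v, arcInd A v v = 0 := fun v => arcInd_of_not (hirr v)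
  have hbound : ∀ a b, a ∉ l → b ∉ l → a ≠ b → A a b → outDeg A b + inDeg A a + 2 ≤
      Fintype.card V := by
    intro a b ha hb hab h
    have hba : ¬ A b a := fun h' =>
      hab (hacyc a b ha hb (.single ⟨h, ha, hb⟩) (.single ⟨h', hb, ha⟩))
    have h₁ := hl.sum_detour_le (X := [a, b])
      (not_perm_append_of_length_le (by simp) hmax) (s := a) (t := b) (by simpa using h)
      (by
        refine List.nodup_append.2 ⟨hl.2.1, by simpa using hab, ?_⟩
        rintro x hx y hy rfl
        simp only [List.mem_cons, List.not_mem_nil, or_false] at hy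
        rcases hy with rfl | rfl
        exacts [ha hx, hb hx]) rfl rfl
    have h₂ : ∑ x ∈ l.toFinsetᶜ, (arcInd A x a + arcInd A b x) + 2 ≤ (l.toFinsetᶜ).card := by
      refine Finset.sum_add_two_le_card (fun x hx => arcInd_add_arcInd_le_one fun h' => ?_)
        (by simpa using ha) (by simpa using hb) hab ?_ ?_
      · have hx' : x ∉ l := by simpa using hx
        exact hab (hacyc a b ha hb (.single ⟨h, ha, hb⟩)
          (.tail (.single ⟨h'.2, hb, hx'⟩) ⟨h'.1, hx', ha⟩))
      · rw [hloop, arcInd_of_not hba]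
      · rw [hloop, arcInd_of_not hba]
    rw [outDeg_eq_sum, inDeg_eq_sum, ← List.sum_map_add_sum_compl hl.2.1 (arcInd A b),
      ← List.sum_map_add_sum_compl hl.2.1 (fun x => arcInd A x a)]
    rw [Finset.sum_add_distrib] at h₂
    rw [List.sum_map_add] at h₁
    omega
  have hdeg := hy.deg_add_deg_le
  by_cases h₁ : A u w
  · have h₂ : ¬ A w u := fun h =>
      hwu (hacyc w u hw hu (.single ⟨h, hw, hu⟩) (.single ⟨h₁, hu, hw⟩))
    have h₃ := hA0.le_in hy hwu hwy h₂
    have h₄ := hbound u w hu hw (Ne.symm hwu) h₁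
    omega
  by_cases h₂ : A w u
  · have h₃ := hA0.le_out hy hwu hwy h₁
    have h₄ := hbound w u hw hu hwu h₂
    omega
  have h₃ := hA0.le_deg hy hwu hwy (by rintro (h | h); exacts [h₁ h, h₂ h])
  have hbound' : ∀ a b, a ∉ l → b ∉ l → a ≠ b → ¬ A a b → ¬ A b a → deg A a + 2 ≤
      Fintype.card V := by
    intro a b ha hb hab h h'
    have h₄ := hl.sum_arcCount_le (not_perm_append_of_length_le (by simp) hmax) ha
    have h₅ : ∑ x ∈ l.toFinsetᶜ, arcCount A a x + 2 ≤ (l.toFinsetᶜ).card := by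
      refine Finset.sum_add_two_le_card (fun x hx => arcInd_add_arcInd_le_one fun h' => ?_)
        (by simpa using ha) (by simpa using hb) hab (arcCount_self hirr a)
        (arcCount_of_not_dAdj (by rintro (h | h) <;> contradiction))
      have hx' : x ∉ l := by simpa using hx
      obtain rfl := hacyc a x ha hx' (.single ⟨h'.1, ha, hx'⟩) (.single ⟨h'.2, hx', ha⟩)
      exact hirr _ h'.1
    rw [deg_eq_sum, ← List.sum_map_add_sum_compl hl.2.1]
    omega
  have h₄ := hbound' u w hu hw (Ne.symm hwu) h₁ h₂
  have h₅ := hbound' w u hw hu hwu h₂ h₁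
  omega

end BadPairs
section Splitting

variable [Fintype V] {A : V → V → Prop}

omit [Fintype V] in
lemma List.pairwise_of_forall_append {R : V → V → Prop} {l : List V}
    (h : ∀ l₁ l₂ l₃ a b, l = l₁ ++ a :: l₂ ++ b :: l₃ → R a b) : l.Pairwise R := by
  induction l with
  | nil => exact .nil
  | cons c l ih =>
    refine List.pairwise_cons.2 ⟨fun b hb => ?_, ih ?_⟩
    · obtain ⟨l₁, l₂, rfl⟩ := List.append_of_mem hb
      exact h [] l₁ l₂ c b (by simp)
    · rintro l₁ l₂ l₃ a b rfl
      exact h (c :: l₁) l₂ l₃ a b (by simp)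

/-- No detour through a vertex `u` outside of a longest cycle avoids the vertex forming a bad pair
with `u`. -/
lemma IsCycleOn.pairwise_of_isBadPair (hirr : ∀ v, ¬ A v v) (hA0 : CondA0 A Set.univ)
    {B G : List V} (hc : IsCycleOn A (B ++ G))
    (hmax : ∀ c, IsCycleOn A c → c.length ≤ (B ++ G).length) {u y : V} (hu : u ∉ B ++ G)
    (huy : IsBadPair A u y) (hy : y ∈ G) : B.Pairwise fun a b => ¬ (A a u ∧ A u b) := by
  refine List.pairwise_of_forall_append ?_
  rintro B₁ M B₂ a b rfl ⟨hau, hub⟩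
  have hc' : IsCycleOn A ((b :: B₂ ++ G ++ B₁ ++ [a]) ++ M) := by
    have : IsCycleOn A ((B₁ ++ a :: M) ++ (b :: B₂ ++ G)) := by simpa using hc
    have : IsCycleOn A ((b :: B₂ ++ G ++ B₁ ++ [a]) ++ M) := by simpa using this.rotate
    exact this
  have hperm : ((b :: B₂ ++ G ++ B₁ ++ [a]) ++ M).Perm (B₁ ++ a :: M ++ b :: B₂ ++ G) := by
    have : ((b :: B₂ ++ G) ++ (B₁ ++ a :: M)).Perm ((B₁ ++ a :: M) ++ (b :: B₂ ++ G)) :=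
      List.perm_append_comm
    simpa using this
  obtain ⟨B', G', p, s', t', z, -, -, hz, hsub, -, -, -, -, -, -, -, h⟩ :=
    hc'.exists_badPair_of_detour hirr hA0 hperm hmax hu (s := b) (t := a) (by simp)
      (List.getLast?_append_of_eq_some rfl) ⟨u, hu, .refl, hub⟩ ⟨u, hu, hau, .refl⟩
  obtain rfl := huy.unique hA0 (h u hu .refl .refl)
  have := (List.nodup_append.1 hc.2.1).2.2 y (by simp [hsub hz]) y hy
  exact this rfl

/-- A bad pair `u`, `y` together with a path `p` through all other vertices such that no arcs
`au` and `ub` (or `ay` and `yb`) have `a` before `b` on `p`. -/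
structure IsSplitting (A : V → V → Prop) (u y : V) (p : List V) : Prop where
  isChain : p.IsChain A
  nodup : (u :: y :: p).Nodup
  mem : ∀ v, v ∈ u :: y :: p
  isBadPair : IsBadPair A u y
  pairwise_left : p.Pairwise fun a b => ¬ (A a u ∧ A u b)
  pairwise_right : p.Pairwise fun a b => ¬ (A a y ∧ A y b)

lemma IsCycleOn.exists_isSplitting (hirr : ∀ v, ¬ A v v) (hA0 : CondA0 A Set.univ)
    (hconn : StronglyConnected A) {l : List V} (hl : IsCycleOn A l)
    (hmax : ∀ c, IsCycleOn A c → c.length ≤ l.length) {u : V} (hu : u ∉ l) :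
    ∃ y p, IsSplitting A u y p := by
  have hall : ∀ v, v ∉ l → v = u := fun v hv => hl.eq_of_not_mem hirr hA0 hconn hmax hu hv
  obtain ⟨B, G, s, t, h₁, h₂, h₃, h₄, h₅, h₆⟩ := hl.exists_segment hconn hu
  obtain ⟨B', G', p, s', t', y, hc, hperm, hy, -, hadj, hp, hpy, hs, ⟨x, hx, -, hus⟩, ht,
    ⟨x', hx', htu, -⟩, hbad⟩ := h₁.exists_badPair_of_detour hirr hA0 h₂ hmax hu h₃ h₄ h₅ h₆
  obtain rfl := (hall x hx).symm
  obtain rfl := (hall x' hx').symm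
  have huy := hbad u hu .refl .refl
  have hmax' : ∀ {l' : List V}, l'.length = l.length →
      ∀ c, IsCycleOn A c → c.length ≤ l'.length := fun h c hc => h ▸ hmax c hc
  have hnp : (p ++ [y]).Nodup := hpy.nodup_iff.2 hl.2.1
  have hyp : y ∉ p := fun h => (List.nodup_append.1 hnp).2.2 y h y (by simp) rfl
  have hup : u ∉ p ++ [y] := fun h => hu (hpy.mem_iff.1 h)
  have hcu : IsCycleOn A (p ++ [u]) := by
    refine IsCycleOn.of_append hp.isChain (by simp) ?_ hs ht rfl rfl htu hus
    refine (List.perm_append_singleton u p).nodup_iff.2 (List.nodup_cons.2 ⟨?_, hp.nodup⟩)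
    exact fun h => hup (by simp [h])
  refine ⟨y, p, hp.isChain, ?_, fun v => ?_, huy, ?_, ?_⟩
  · refine List.nodup_cons.2 ⟨?_, List.nodup_cons.2 ⟨hyp, hp.nodup⟩⟩
    simpa [or_comm] using hup
  · by_cases hv : v ∈ l
    · have := hpy.mem_iff.2 hv
      simp only [List.mem_append, List.mem_cons, List.not_mem_nil, or_false] at this ⊢
      tauto
    · simp [hall v hv]
  · refine hp.pairwise _ (fun g hg v => ⟨fun h => hadj g hg (.inr h.1),
      fun h => hadj g hg (.inl h.2)⟩) (hc.pairwise_of_isBadPair hirr hA0 (hmax' hperm.length_eq)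
      (fun h => hu (hperm.mem_iff.1 h)) huy hy)
  · refine hcu.pairwise_of_isBadPair hirr hA0 (hmax' ?_) ?_ huy.symm (by simp)
    · simpa using hpy.length_eq
    · simpa [hyp] using huy.ne.symm

end Splitting
section Nonadjacent

variable {A : V → V → Prop}

open Classical in
/-- The number of vertices on `p` that are not adjacent to `x`. -/
noncomputable def nonadjCount (A : V → V → Prop) (p : List V) (x : V) : ℕ :=
  p.countP fun v => ¬ DAdj A x v

lemma nonadjCount_append (p q : List V) (x : V) :
    nonadjCount A (p ++ q) x = nonadjCount A p x + nonadjCount A q x :=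
  List.countP_append

lemma dAdj_flip (x v : V) : DAdj (flip A) x v ↔ DAdj A x v := or_comm

lemma nonadjCount_flip_reverse (p : List V) (x : V) :
    nonadjCount (flip A) p.reverse x = nonadjCount A p x := by
  rw [nonadjCount, nonadjCount, List.countP_reverse]
  exact List.countP_congr fun v _ => by
    simpa only [decide_eq_true_eq] using not_congr (dAdj_flip x v)

lemma arcCount_add_nonadjCount_le {x c : V} (h : ¬ (A c x ∧ A x c)) :
    arcCount A x c + nonadjCount A [c] x ≤ 1 := by
  by_cases hc : DAdj A x c
  · have := arcInd_add_arcInd_le_one h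
    simp [nonadjCount, hc, arcCount]
    omega
  · simp [nonadjCount, hc, arcCount_of_not_dAdj hc]

lemma arcCount_add_nonadjCount_le_two (x c : V) :
    arcCount A x c + nonadjCount A [c] x ≤ 2 := by
  by_cases hc : DAdj A x c
  · simp [nonadjCount, hc, arcCount_le_two]
  · simp [nonadjCount, hc, arcCount_of_not_dAdj hc]

lemma sum_arcCount_add_nonadjCount_le {p : List V} {x : V} (h : ∀ c ∈ p, ¬ (A c x ∧ A x c)) :
    (p.map (arcCount A x)).sum + nonadjCount A p x ≤ p.length := by
  induction p with
  | nil => simp [nonadjCount]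
  | cons c p ih =>
    have h₁ := arcCount_add_nonadjCount_le (h c (by simp))
    have h₂ := ih fun d hd => h d (by simp [hd])
    have h₃ := nonadjCount_append (A := A) [c] p x
    simp only [List.singleton_append] at h₃
    simp only [List.map_cons, List.sum_cons, List.length_cons]
    omega

lemma sum_arcCount_add_nonadjCount_le_of_pairwise {p : List V} {x : V}
    (h : p.Pairwise fun a b => ¬ (A a x ∧ A x b)) :
    (p.map (arcCount A x)).sum + nonadjCount A p x ≤ p.length + 1 := by
  induction p with
  | nil => simp [nonadjCount]
  | cons c p ih =>
    obtain ⟨hc, hp⟩ := List.pairwise_cons.1 h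
    have h₃ := nonadjCount_append (A := A) [c] p x
    simp only [List.singleton_append] at h₃
    simp only [List.map_cons, List.sum_cons, List.length_cons]
    by_cases hcx : A c x ∧ A x c
    · have h₁ := sum_arcCount_add_nonadjCount_le (A := A) (p := p) (x := x)
        fun d hd hdx => hc d hd ⟨hcx.1, hdx.2⟩
      have h₂ := arcCount_add_nonadjCount_le_two (A := A) x c
      omega
    · have h₁ := arcCount_add_nonadjCount_le hcx
      have h₂ := ih hp
      omega

lemma length_le_nonadjCount_add {p : List V} {x y : V}
    (h : ∀ v ∈ p, ¬ (DAdj A x v ∧ DAdj A y v)) :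
    p.length ≤ nonadjCount A p x + nonadjCount A p y := by
  induction p with
  | nil => simp
  | cons c p ih =>
    have h₁ := nonadjCount_append (A := A) [c] p x
    have h₂ := nonadjCount_append (A := A) [c] p y
    have h₃ := ih fun d hd => h d (by simp [hd])
    have h₄ : 1 ≤ nonadjCount A [c] x + nonadjCount A [c] y := by
      have := h c (by simp)
      by_cases hx : DAdj A x c
      · have hy : ¬ DAdj A y c := fun hy => this ⟨hx, hy⟩
        simp [nonadjCount, hy]
      · simp [nonadjCount, hx]
    simp only [List.singleton_append] at h₁ h₂
    simp only [List.length_cons]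
    omega

lemma sum_arcInd_le_one_of_pairwise {p : List V} {x : V}
    (h : p.Pairwise fun a b => ¬ (A a x ∧ A x b)) (hx : ∀ v ∈ p, A x v) :
    (p.map fun v => arcInd A v x).sum ≤ 1 := by
  induction p with
  | nil => simp
  | cons c p ih =>
    obtain ⟨hc, hp⟩ := List.pairwise_cons.1 h
    rcases p with _ | ⟨d, p⟩
    · simpa using arcInd_le_one A c x
    · have h₁ : ¬ A c x := fun h' => hc d (by simp) ⟨h', hx d (by simp)⟩
      simpa [arcInd_of_not h₁] using ih hp fun v hv => hx v (by simp [hv])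

end Nonadjacent

section SplittingDegrees

variable [Fintype V] {A : V → V → Prop} {u y : V} {p : List V}

lemma CondA0.flip (h : CondA0 A Set.univ) : CondA0 (flip A) Set.univ := by
  intro x hx y hy z hz hxy hxz hyz hadj
  obtain ⟨h₁, h₂⟩ := h x hx y hy z hz hxy hxz hyz fun h => hadj h.symm
  have hd : ∀ v, deg (_root_.flip A) v = deg A v := fun v => add_comm _ _
  rw [hd, hd]
  exact ⟨h₂, h₁⟩

lemma IsBadPair.flip (h : IsBadPair A u y) : IsBadPair (flip A) u y := by
  refine ⟨h.ne, fun h' => h.not_dAdj h'.symm, ?_⟩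
  have hd : ∀ v, deg (_root_.flip A) v = deg A v := fun v => add_comm _ _
  rw [hd, hd]
  exact h.deg_add_deg_le

namespace IsSplitting

lemma symm (h : IsSplitting A u y p) : IsSplitting A y u p where
  isChain := h.isChain
  nodup := (List.Perm.swap u y p).nodup_iff.2 h.nodup
  mem v := (List.Perm.swap u y p).mem_iff.2 (h.mem v)
  isBadPair := h.isBadPair.symm
  pairwise_left := h.pairwise_right
  pairwise_right := h.pairwise_left

lemma reverse (h : IsSplitting A u y p) : IsSplitting (flip A) u y p.reverse where
  isChain := List.isChain_reverse.2 h.isChain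
  nodup := (((List.reverse_perm p).cons y).cons u).nodup_iff.2 h.nodup
  mem v := (((List.reverse_perm p).cons y).cons u).mem_iff.2 (h.mem v)
  isBadPair := h.isBadPair.flip
  pairwise_left := List.pairwise_reverse.2 (h.pairwise_left.imp fun h h' => h h'.symm)
  pairwise_right := List.pairwise_reverse.2 (h.pairwise_right.imp fun h h' => h h'.symm)

lemma sum_eq (h : IsSplitting A u y p) (f : V → ℕ) :
    ∑ v, f v = f u + f y + (p.map f).sum := by
  classical
  have : (u :: y :: p).toFinset = Finset.univ := by
    ext v
    simpa using h.mem v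
  rw [← this, List.sum_toFinset _ h.nodup]
  simp [add_assoc]

lemma length_add_two (h : IsSplitting A u y p) : p.length + 2 = Fintype.card V := by
  have := h.sum_eq fun _ => 1
  simp at this
  omega

lemma outDeg_eq (hirr : ∀ v, ¬ A v v) (h : IsSplitting A u y p) :
    outDeg A u = (p.map (arcInd A u)).sum := by
  rw [outDeg_eq_sum, h.sum_eq, arcInd_of_not (hirr u),
    arcInd_of_not fun h' => h.isBadPair.not_dAdj (.inl h')]
  simp

lemma inDeg_eq (hirr : ∀ v, ¬ A v v) (h : IsSplitting A u y p) :
    inDeg A u = (p.map fun v => arcInd A v u).sum := by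
  rw [inDeg_eq_sum, h.sum_eq, arcInd_of_not (hirr u),
    arcInd_of_not fun h' => h.isBadPair.not_dAdj (.inr h')]
  simp

lemma deg_add_nonadjCount_lt (hirr : ∀ v, ¬ A v v) (h : IsSplitting A u y p) :
    deg A u + nonadjCount A p u < Fintype.card V := by
  have h₁ := sum_arcCount_add_nonadjCount_le_of_pairwise h.pairwise_left
  rw [deg_eq_sum, h.sum_eq, arcCount_self hirr, arcCount_of_not_dAdj h.isBadPair.not_dAdj,
    ← h.length_add_two]
  omega

lemma ne_of_mem (h : IsSplitting A u y p) {z : V} (hz : z ∈ p) : z ≠ u ∧ z ≠ y := by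
  have := h.nodup
  constructor <;> rintro rfl <;> simp_all

lemma le_outDeg_add_inDeg (hirr : ∀ v, ¬ A v v) (hA0 : CondA0 A Set.univ)
    (h : IsSplitting A u y p) {z : V} (hz : z ∈ p) (huz : ¬ A u z) :
    Fintype.card V + (nonadjCount A p u + nonadjCount A p y) ≤ outDeg A u + inDeg A z := by
  have h₁ := h.deg_add_nonadjCount_lt hirr
  have h₂ := h.symm.deg_add_nonadjCount_lt hirr
  have h₃ := hA0.le_out h.isBadPair (h.ne_of_mem hz).1 (h.ne_of_mem hz).2 huz
  omega

lemma le_inDeg_add_outDeg (hirr : ∀ v, ¬ A v v) (hA0 : CondA0 A Set.univ)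
    (h : IsSplitting A u y p) {z : V} (hz : z ∈ p) (hzu : ¬ A z u) :
    Fintype.card V + (nonadjCount A p u + nonadjCount A p y) ≤ inDeg A u + outDeg A z := by
  have := h.reverse.le_outDeg_add_inDeg (A := flip A) hirr hA0.flip (List.mem_reverse.2 hz) hzu
  simp only [nonadjCount_flip_reverse] at this
  exact this

lemma two_add_le_outDeg (hirr : ∀ v, ¬ A v v) (hA0 : CondA0 A Set.univ)
    (hn : 4 ≤ Fintype.card V) (h : IsSplitting A u y p) :
    2 + (nonadjCount A p u + nonadjCount A p y) ≤ outDeg A u := by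
  by_cases hz : ∃ z ∈ p, ¬ A u z
  · obtain ⟨z, hz, huz⟩ := hz
    have h₁ := h.le_outDeg_add_inDeg hirr hA0 hz huz
    have h₂ := Finset.sum_add_two_le_card (s := Finset.univ) (f := fun v => arcInd A v z)
      (fun v _ => arcInd_le_one A v z) (Finset.mem_univ u) (Finset.mem_univ z)
      (h.ne_of_mem hz).1.symm (arcInd_of_not huz) (arcInd_of_not (hirr z))
    rw [← inDeg_eq_sum, Finset.card_univ] at h₂
    omega
  · push Not at hz
    exfalso
    have h₁ := sum_arcInd_le_one_of_pairwise h.pairwise_left hz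
    rw [← h.inDeg_eq hirr] at h₁
    have hlen := h.length_add_two
    rcases p with _ | ⟨a, _ | ⟨b, p⟩⟩
    · simp at hlen; omega
    · simp at hlen; omega
    · have hau : ¬ A a u := fun hau =>
        (List.pairwise_cons.1 h.pairwise_left).1 b (by simp) ⟨hau, hz b (by simp)⟩
      have ha : a ∈ a :: b :: p := by simp
      have h₂ := h.le_inDeg_add_outDeg hirr hA0 ha hau
      have h₃ := Finset.sum_add_two_le_card (s := Finset.univ) (f := arcInd A a)
        (fun v _ => arcInd_le_one A a v) (Finset.mem_univ u) (Finset.mem_univ a)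
        (h.ne_of_mem ha).1.symm (arcInd_of_not hau) (arcInd_of_not (hirr a))
      rw [← outDeg_eq_sum, Finset.card_univ] at h₃
      omega

lemma two_add_le_inDeg (hirr : ∀ v, ¬ A v v) (hA0 : CondA0 A Set.univ)
    (hn : 4 ≤ Fintype.card V) (h : IsSplitting A u y p) :
    2 + (nonadjCount A p u + nonadjCount A p y) ≤ inDeg A u := by
  have := h.reverse.two_add_le_outDeg (A := flip A) hirr hA0.flip hn
  simp only [nonadjCount_flip_reverse] at this
  exact this

end IsSplitting

end SplittingDegrees
section Reinsertion

variable [Fintype V] {A : V → V → Prop}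

omit [Fintype V] in
lemma List.sum_map_eq_zero_of_forall {l : List V} {f : V → ℕ} (h : ∀ x ∈ l, f x = 0) :
    (l.map f).sum = 0 :=
  List.sum_eq_zero (by simpa using h)

/-- The vertices `u` and `y` can be included simultaneously into a segment of the path of a
splitting. -/
lemma IsSplitting.exists_cycle_of_last (hirr : ∀ v, ¬ A v v) (hA0 : CondA0 A Set.univ)
    {u y f j z t : V} {D₁ Y Z D₂ : List V}
    (h : IsSplitting A u y (D₁ ++ Y ++ z :: Z ++ D₂))
    (hD : D₁.length ≤ nonadjCount A (D₁ ++ Y ++ z :: Z ++ D₂) u +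
      nonadjCount A (D₁ ++ Y ++ z :: Z ++ D₂) y)
    (hf : Y.head? = some f) (hj : Y.getLast? = some j) (hyf : A y f) (hjy : A j y)
    (hi : ∃ i ∈ Y, A i u) (ht : (z :: Z).getLast? = some t) (htu : A t u) :
    ∃ c, IsCycleOn A c ∧ (c ++ (D₁ ++ D₂)).Perm (u :: y :: (D₁ ++ Y ++ z :: Z ++ D₂)) := by
  classical
  by_contra hno
  have hjY : j ∈ Y := List.mem_of_getLast? hj
  have hlater : ∀ i ∈ Y, ∀ v ∈ z :: Z ++ D₂, ¬ (A i u ∧ A u v) ∧ ¬ (A i y ∧ A y v) := by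
    intro i hi v hv
    have h₁ := h.pairwise_left
    have h₂ := h.pairwise_right
    rw [List.append_assoc] at h₁ h₂
    exact ⟨(List.pairwise_append.1 h₁).2.2 i (by simp [hi]) v hv,
      (List.pairwise_append.1 h₂).2.2 i (by simp [hi]) v hv⟩
  have hu : ∀ v ∈ z :: Z ++ D₂, ¬ A u v := by
    obtain ⟨i, hi, hiu⟩ := hi
    exact fun v hv huv => (hlater i hi v hv).1 ⟨hiu, huv⟩
  have hyz : ¬ A y z := fun hyz => (hlater j hjY z (by simp)).2 ⟨hjy, hyz⟩
  obtain ⟨hDYZ, -, -⟩ := List.isChain_append.1 h.isChain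
  obtain ⟨hDY, hZ, -⟩ := List.isChain_append.1 hDYZ
  obtain ⟨-, hY, -⟩ := List.isChain_append.1 hDY
  have hchain : Y.IsChain fun a b => ¬ (A a z ∧ A u b) := by
    refine List.isChain_iff_forall_rel_of_append_cons_cons.2 ?_
    rintro a b Y₁ Y₂ rfl ⟨haz, hub⟩
    obtain ⟨hY₁, hY₂, hab⟩ := List.isChain_append.1 hY
    have hperm : (((z :: Z ++ u :: b :: Y₂) ++ y :: (Y₁ ++ [a])) ++ (D₁ ++ D₂)).Perm
        (u :: y :: (D₁ ++ (Y₁ ++ a :: b :: Y₂) ++ z :: Z ++ D₂)) := by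
      rw [List.perm_iff_count]
      intro v
      simp only [List.count_append, List.count_cons, List.count_nil]
      omega
    refine hno ⟨_, IsCycleOn.of_append (s := z) (t := j) (x := y) (y := a) ?_ ?_ ?_ rfl ?_ rfl ?_
      hjy haz, hperm⟩
    · refine List.isChain_append.2 ⟨hZ, List.isChain_cons_cons.2 ⟨hub, hY₂.tail⟩, ?_⟩
      rw [ht]
      simpa using htu
    · have : (Y₁ ++ [a]).IsChain A :=
        (List.isChain_append (l₁ := Y₁ ++ [a]) (l₂ := b :: Y₂)).1 (by simpa using hY) |>.1
      refine List.isChain_cons.2 ⟨?_, this⟩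
      intro v hv
      have : v = f := by
        cases Y₁ <;> simp_all
      exact this ▸ hyf
    · exact (List.nodup_append.1 (hperm.nodup_iff.2 h.nodup)).1
    · rw [List.getLast?_append_of_eq_some]
      simpa [List.getLast?_append] using hj
    · exact (List.getLast?_append_of_eq_some (l₁ := y :: Y₁) (l₂ := [a]) rfl)
  have h₁ := h.le_outDeg_add_inDeg hirr hA0 (z := z) (by simp) (hu z (by simp))
  have h₂ := h.outDeg_eq hirr
  have h₃ : inDeg A z = _ := (inDeg_eq_sum A z).trans (h.sum_eq fun v => arcInd A v z)
  rw [arcInd_of_not (hu z (by simp)), arcInd_of_not hyz] at h₃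
  have h₄ := List.sum_map_add_le_of_isChain (f := fun a => arcInd A a z) (g := fun b => arcInd A u b)
    (hchain.imp fun a b hab => arcInd_add_arcInd_le_one hab) hf hj
  have h₅ := arcInd_le_one A j z
  have h₆ := arcInd_le_one A u f
  have h₇ := List.sum_map_le_mul_length (l := D₁) fun v _ => arcInd_le_one A u v
  have h₈ := List.sum_map_le_mul_length (l := D₁) fun v _ => arcInd_le_one A v z
  have h₉ := List.sum_map_le_mul_length (l := D₂) fun v _ => arcInd_le_one A v z
  have h₁₀ := List.sum_map_le_mul_length (l := Z) fun v _ => arcInd_le_one A v z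
  have h₁₁ := List.sum_map_eq_zero_of_forall (l := z :: Z ++ D₂) (f := arcInd A u)
    fun v hv => arcInd_of_not (hu v hv)
  have h₁₂ := h.length_add_two
  have h₁₃ := arcInd_of_not (hirr z)
  rw [List.sum_map_add] at h₄
  simp only [List.map_append, List.sum_append, List.length_append, List.map_cons, List.sum_cons,
    List.length_cons] at *
  omega

lemma IsSplitting.arc_of_dAdj (hirr : ∀ v, ¬ A v v) (hA0 : CondA0 A Set.univ)
    (hn : 4 ≤ Fintype.card V) {u y f : V} {D q : List V} (h : IsSplitting A u y (D ++ f :: q))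
    (hD : D.length ≤ nonadjCount A (D ++ f :: q) u + nonadjCount A (D ++ f :: q) y)
    (hf : DAdj A u f) : A u f := by
  by_contra huf
  have hfu : A f u := hf.resolve_left huf
  have h₁ := h.two_add_le_outDeg hirr hA0 hn
  have h₂ := h.outDeg_eq hirr
  have h₃ := List.sum_map_le_mul_length (l := D) fun v _ => arcInd_le_one A u v
  have h₄ := List.sum_map_eq_zero_of_forall (l := f :: q) (f := arcInd A u) fun v hv => by
    refine arcInd_of_not fun huv => ?_
    rcases List.mem_cons.1 hv with rfl | hv
    · exact huf huv
    · exact (List.pairwise_cons.1 (List.pairwise_append.1 h.pairwise_left).2.1).1 v hv ⟨hfu, huv⟩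
  rw [List.map_append, List.sum_append, h₄] at h₂
  omega

lemma IsSplitting.arc_of_dAdj' (hirr : ∀ v, ¬ A v v) (hA0 : CondA0 A Set.univ)
    (hn : 4 ≤ Fintype.card V) {u y t : V} {D q : List V} (h : IsSplitting A u y (q ++ t :: D))
    (hD : D.length ≤ nonadjCount A (q ++ t :: D) u + nonadjCount A (q ++ t :: D) y)
    (ht : DAdj A u t) : A t u := by
  have hrev : (q ++ t :: D).reverse = D.reverse ++ t :: q.reverse := by simp
  have h' := h.reverse
  rw [← nonadjCount_flip_reverse, ← nonadjCount_flip_reverse (x := y)] at hD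
  rw [hrev] at h' hD
  exact h'.arc_of_dAdj (A := flip A) hirr hA0.flip hn (by simpa using hD) ht.symm

lemma IsSplitting.exists_arc_mem (hirr : ∀ v, ¬ A v v) (hA0 : CondA0 A Set.univ)
    (hn : 4 ≤ Fintype.card V) {u y t : V} {D₁ q D₂ : List V}
    (h : IsSplitting A u y (D₁ ++ (q ++ [t]) ++ D₂))
    (hD : D₁.length + D₂.length ≤ nonadjCount A (D₁ ++ (q ++ [t]) ++ D₂) u +
      nonadjCount A (D₁ ++ (q ++ [t]) ++ D₂) y) : ∃ i ∈ q, A i u := by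
  by_contra hq
  push Not at hq
  have h₁ := h.two_add_le_inDeg hirr hA0 hn
  have h₂ := h.inDeg_eq hirr
  have h₃ := List.sum_map_le_mul_length (l := D₁) fun v _ => arcInd_le_one A v u
  have h₄ := List.sum_map_le_mul_length (l := D₂) fun v _ => arcInd_le_one A v u
  have h₅ := arcInd_le_one A t u
  have h₆ := List.sum_map_eq_zero_of_forall (l := q) (f := fun v => arcInd A v u)
    fun v hv => arcInd_of_not (hq v hv)
  simp only [List.map_append, List.sum_append, List.map_cons, List.map_nil, List.sum_cons,
    List.sum_nil] at h₂
  omega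

omit [Fintype V] in
lemma List.exists_eq_append_cons_first {P : V → Prop} {l : List V} (h : ∃ x ∈ l, P x) :
    ∃ l₁ a l₂, l = l₁ ++ a :: l₂ ∧ P a ∧ ∀ v ∈ l₁, ¬ P v := by
  induction l with
  | nil => simp at h
  | cons c l ih =>
    by_cases hc : P c
    · exact ⟨[], c, l, rfl, hc, by simp⟩
    · obtain ⟨l₁, a, l₂, rfl, ha, hl₁⟩ := ih (by simpa [hc] using h)
      exact ⟨c :: l₁, a, l₂, rfl, ha, by simpa [hc] using hl₁⟩

omit [Fintype V] in
lemma List.exists_eq_append_cons_last {P : V → Prop} {l : List V} (h : ∃ x ∈ l, P x) :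
    ∃ l₁ a l₂, l = l₁ ++ a :: l₂ ∧ P a ∧ ∀ v ∈ l₂, ¬ P v := by
  obtain ⟨l₁, a, l₂, hl, ha, hl₁⟩ :=
    List.exists_eq_append_cons_first (l := l.reverse) (P := P) (by simpa using h)
  refine ⟨l₂.reverse, a, l₁.reverse, ?_, ha, by simpa using hl₁⟩
  rw [← l.reverse_reverse, hl]
  simp

lemma IsSplitting.exists_mem_dAdj (hirr : ∀ v, ¬ A v v) (hA0 : CondA0 A Set.univ)
    (hn : 4 ≤ Fintype.card V) {u y : V} {p : List V} (h : IsSplitting A u y p) :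
    ∃ v ∈ p, DAdj A u v ∧ DAdj A y v := by
  by_contra hno
  push Not at hno
  have h₁ := length_le_nonadjCount_add (A := A) (p := p) (x := u) (y := y)
    fun v hv hv' => hno v hv hv'.1 hv'.2
  have h₂ := h.two_add_le_outDeg hirr hA0 hn
  have h₃ := h.outDeg_eq hirr
  have h₄ := List.sum_map_le_mul_length (l := p) fun v _ => arcInd_le_one A u v
  omega

/-- A splitting yields a cycle that misses only vertices not adjacent to both vertices of the bad
pair. -/
lemma IsSplitting.exists_cycle (hirr : ∀ v, ¬ A v v) (hA0 : CondA0 A Set.univ)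
    (hn : 4 ≤ Fintype.card V) {u y : V} {p : List V} (h : IsSplitting A u y p) :
    ∃ c D, IsCycleOn A c ∧ (c ++ D).Perm (u :: y :: p) ∧
      D.length ≤ nonadjCount A p u + nonadjCount A p y ∧
      ∀ v ∈ D, v ∈ p ∧ ¬ (DAdj A u v ∧ DAdj A y v) := by
  obtain ⟨D₁, f, q, hp, hf, hD₁⟩ :=
    List.exists_eq_append_cons_first (h.exists_mem_dAdj hirr hA0 hn)
  obtain ⟨Q, t, D₂, hq, ht, hD₂⟩ := List.exists_eq_append_cons_last
    (l := f :: q) (P := fun v => DAdj A u v ∧ DAdj A y v) ⟨f, by simp, hf⟩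
  have hp' : p = D₁ ++ (Q ++ [t]) ++ D₂ := by simp [hp, hq]
  have hD : ∀ v ∈ D₁ ++ D₂, ¬ (DAdj A u v ∧ DAdj A y v) := by
    intro v hv
    rcases List.mem_append.1 hv with hv | hv
    exacts [hD₁ v hv, hD₂ v hv]
  have hlen : D₁.length + D₂.length ≤ nonadjCount A p u + nonadjCount A p y := by
    have := length_le_nonadjCount_add hD
    rw [hp']
    simp only [nonadjCount_append, List.length_append] at this ⊢
    omega
  have huf : A u f ∧ A y f := by
    have hs := h.symm
    have hlen' := hlen
    rw [hp] at h hs hlen'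
    exact ⟨h.arc_of_dAdj hirr hA0 hn (by omega) hf.1, hs.arc_of_dAdj hirr hA0 hn (by omega) hf.2⟩
  have htu : A t u ∧ A t y := by
    have hs := h.symm
    have hlen' := hlen
    rw [show p = (D₁ ++ Q) ++ t :: D₂ by simp [hp, hq]] at h hs hlen'
    exact ⟨h.arc_of_dAdj' hirr hA0 hn (by omega) ht.1, hs.arc_of_dAdj' hirr hA0 hn (by omega) ht.2⟩
  obtain ⟨⟨i, hi, hiu⟩, i', hi', hiy⟩ : (∃ i ∈ Q, A i u) ∧ ∃ i ∈ Q, A i y := by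
    have hs := h.symm
    have hlen' := hlen
    rw [hp'] at h hs hlen'
    exact ⟨h.exists_arc_mem hirr hA0 hn hlen', hs.exists_arc_mem hirr hA0 hn (by omega)⟩
  obtain ⟨X, j, W, hQ, hj, hW⟩ := List.exists_eq_append_cons_last
    (l := Q) (P := fun v => A v u ∨ A v y) ⟨i, hi, .inl hiu⟩
  have hmem : ∀ v ∈ Q, A v u ∨ A v y → v ∈ X ++ [j] := by
    intro v hv hv'
    have := mt (hW v) (not_not.2 hv')
    simp only [hQ, List.mem_append, List.mem_cons, List.not_mem_nil, or_false] at hv ⊢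
    tauto
  obtain ⟨z, Z, hz⟩ := List.exists_cons_of_ne_nil (l := W ++ [t]) (by simp)
  have hp'' : p = D₁ ++ (X ++ [j]) ++ z :: Z ++ D₂ := by simp [hp', hQ, ← hz]
  have hzt : (z :: Z).getLast? = some t := hz ▸ List.getLast?_append_of_eq_some rfl
  have hXf : (X ++ [j]).head? = some f := by
    rw [hQ] at hq
    cases X <;> simp_all
  rw [hp''] at h hlen ⊢
  have key : ∃ c, IsCycleOn A c ∧
      (c ++ (D₁ ++ D₂)).Perm (u :: y :: (D₁ ++ (X ++ [j]) ++ z :: Z ++ D₂)) := by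
    rcases hj with hj | hj
    · obtain ⟨c, hc, hperm⟩ := h.symm.exists_cycle_of_last hirr hA0 (by omega) hXf
        (List.getLast?_append_of_eq_some rfl) huf.1 hj ⟨i', hmem i' hi' (.inr hiy), hiy⟩ hzt htu.2
      exact ⟨c, hc, hperm.trans (List.Perm.swap u y _)⟩
    · exact h.exists_cycle_of_last hirr hA0 (by omega) hXf
        (List.getLast?_append_of_eq_some rfl) huf.2 hj ⟨i, hmem i hi (.inl hiu), hiu⟩ hzt htu.1
  obtain ⟨c, hc, hperm⟩ := key
  refine ⟨c, D₁ ++ D₂, hc, hperm, by simpa using hlen, fun v hv => ⟨?_, hD v hv⟩⟩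
  simp only [List.mem_append] at hv ⊢
  tauto

/-- A vertex not adjacent to both vertices of the bad pair of a splitting has a large degree. -/
lemma IsSplitting.lt_deg (hirr : ∀ v, ¬ A v v) (hA0 : CondA0 A Set.univ) {u y z : V} {p : List V}
    (h : IsSplitting A u y p) (hz : z ∈ p) (hadj : ¬ (DAdj A u z ∧ DAdj A y z)) :
    Fintype.card V + (nonadjCount A p u + nonadjCount A p y) < deg A z := by
  have h₁ := h.deg_add_nonadjCount_lt hirr
  have h₂ := h.symm.deg_add_nonadjCount_lt hirr
  by_cases hu : DAdj A u z
  · have := hA0.le_deg h.isBadPair.symm (h.ne_of_mem hz).2 (h.ne_of_mem hz).1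
      fun hy => hadj ⟨hu, hy⟩
    omega
  · have := hA0.le_deg h.isBadPair (h.ne_of_mem hz).1 (h.ne_of_mem hz).2 hu
    omega

/-- A cycle missing at most `k` vertices, all of degree larger than `n + k`, can be extended to a
Hamiltonian cycle. -/
lemma IsCycleOn.exists_hamiltonian (hirr : ∀ v, ¬ A v v) {c D : List V} (hc : IsCycleOn A c)
    (hn : (c ++ D).Nodup) (hD : ∀ v, v ∈ c ++ D)
    (hdeg : ∀ v ∈ D, Fintype.card V + D.length < deg A v) :
    ∃ l, IsCycleOn A l ∧ ∀ v, v ∈ l := by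
  classical
  induction D generalizing c with
  | nil => exact ⟨c, hc, by simpa using hD⟩
  | cons z D ih =>
    have hz : z ∉ c := fun h => (List.nodup_append.1 hn).2.2 z h z (by simp) rfl
    have hcard : Fintype.card V = c.length + D.length + 1 := by
      have : (c ++ z :: D).toFinset = Finset.univ := by
        ext v
        simpa [or_left_comm] using hD v
      rw [← Finset.card_univ, ← this, List.toFinset_card_of_nodup hn]
      simp
      omega
    obtain ⟨c', hc', hperm⟩ : ∃ c', IsCycleOn A c' ∧ c'.Perm (c ++ [z]) := by
      by_contra hno
      push Not at hno
      have h₁ := hc.sum_arcCount_le hno hz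
      have h₂ := Finset.sum_add_le_mul_card (s := c.toFinsetᶜ) (f := arcCount A z) (c := 2)
        (fun v _ => arcCount_le_two A z v) (a := z) (by simpa using hz) (arcCount_self hirr z)
      have h₃ := List.sum_map_add_sum_compl hc.2.1 (arcCount A z)
      have h₄ := hdeg z (by simp)
      rw [← deg_eq_sum] at h₃
      rw [Finset.card_compl, List.toFinset_card_of_nodup hc.2.1] at h₂
      simp only [List.length_cons] at h₄
      omega
    have hperm' : (c' ++ D).Perm (c ++ z :: D) := by simpa using hperm.append_right D
    refine ih hc' (hperm'.nodup_iff.2 hn) (fun v => hperm'.mem_iff.2 (hD v)) fun v hv => ?_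
    have := hdeg v (by simp [hv])
    simp only [List.length_cons] at this
    omega

lemma IsSplitting.exists_hamiltonian (hirr : ∀ v, ¬ A v v) (hA0 : CondA0 A Set.univ)
    (hn : 4 ≤ Fintype.card V) {u y : V} {p : List V} (h : IsSplitting A u y p) :
    ∃ l, IsCycleOn A l ∧ ∀ v, v ∈ l := by
  obtain ⟨c, D, hc, hperm, hlen, hD⟩ := h.exists_cycle hirr hA0 hn
  refine hc.exists_hamiltonian hirr (hperm.nodup_iff.2 h.nodup)
    (fun v => hperm.mem_iff.2 (h.mem v)) fun v hv => ?_
  have := h.lt_deg hirr hA0 (hD v hv).1 (hD v hv).2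
  omega

omit [Fintype V] in
lemma StronglyConnected.exists_isCycleOn (hconn : StronglyConnected A) {a b : V} (hab : a ≠ b) :
    ∃ c, IsCycleOn A c := by
  obtain ⟨l, ⟨-, hn, hl⟩, ha, hb⟩ := hconn a b hab
  rcases l with _ | ⟨c, _ | ⟨x, l⟩⟩
  · simp at ha
  · simp_all
  obtain rfl : c = a := by simpa using ha
  have hcx : A c x := (List.isChain_cons_cons.1 hl).1
  have hne : x ≠ c := by
    rintro rfl
    simp at hn
  obtain ⟨m, ⟨-, hm, hmA⟩, hx, hc⟩ := hconn x c hne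
  refine ⟨m, ?_, hm, hmA, ?_⟩
  · rcases m with _ | ⟨d, _ | ⟨e, m⟩⟩ <;> simp_all
  · rw [hx, hc]
    simpa using hcx

end Reinsertion
/-- Theorem G, Manoussakis. -/
theorem manoussakis_hamiltonian [Fintype V] (A : V → V → Prop)
    (hloops : ∀ v, ¬ A v v)
    (hn : 4 ≤ Fintype.card V) (hconn : StronglyConnected A)
    (hA0 : CondA0 A (Set.univ : Set V)) :
    ∃ l : List V, IsCycleOn A l ∧ ∀ v : V, v ∈ l := by
  obtain ⟨a, b, hab⟩ := Fintype.exists_pair_of_one_lt_card (α := V) (by omega)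
  obtain ⟨l, hl, hmax⟩ : ∃ l, IsCycleOn A l ∧ ∀ c, IsCycleOn A c → c.length ≤ l.length := by
    obtain ⟨c, hc⟩ := hconn.exists_isCycleOn hab
    have hbdd : BddAbove {k | ∃ l, IsCycleOn A l ∧ l.length = k} := by
      refine ⟨Fintype.card V, ?_⟩
      rintro _ ⟨l, hl, rfl⟩
      exact hl.2.1.length_le_card
    have hne : {k | ∃ l, IsCycleOn A l ∧ l.length = k}.Nonempty := ⟨c.length, c, hc, rfl⟩
    obtain ⟨l, hl, h⟩ := Nat.sSup_mem hne hbdd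
    exact ⟨l, hl, fun c hc => h ▸ le_csSup hbdd ⟨c, hc, rfl⟩⟩
  by_cases hall : ∀ v, v ∈ l
  · exact ⟨l, hl, hall⟩
  push Not at hall
  obtain ⟨u, hu⟩ := hall
  obtain ⟨y, p, h⟩ := hl.exists_isSplitting hloops hA0 hconn hmax hu
  exact h.exists_hamiltonian hloops hA0 hn
end

section
/- Let G be a 2-connected undirected graph of order n and let S be a subset of the vertices of G. If d(x) + d(y) ≥ n for any two nonadjacent vertices x ∈ S and y ∈ S, then S is cyclable in G; that is, G contains a cycle through all the vertices of S. -/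
/-!
Basic definitions for finite digraphs (no loops, no multiple arcs), where the arc
relation is `A : V → V → Prop`.  Paths and cycles are given as lists of (distinct)
vertices.
-/

variable {V : Type*}

namespace SimpleGraph

variable {G : SimpleGraph V}

/-- `S` is cyclable in `G` if some cycle of `G` passes through all the vertices of `S`. -/
def IsCyclable (G : SimpleGraph V) (S : Set V) : Prop :=
  ∃ (v : V) (c : G.Walk v v), c.IsCycle ∧ ∀ s ∈ S, s ∈ c.support

lemma IsCyclable.anti {S T : Set V} (h : G.IsCyclable T) (hST : S ⊆ T) : G.IsCyclable S := by
  obtain ⟨v, c, hc, hT⟩ := h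
  exact ⟨v, c, hc, fun s hs ↦ hT s (hST hs)⟩

/-- A path with at least two edges whose ends are adjacent closes up to a cycle. -/
lemma Walk.IsPath.isCyclable {x y : V} {p : G.Walk x y} (hp : p.IsPath) (hl : 2 ≤ p.length)
    (h : G.Adj y x) : G.IsCyclable {v | v ∈ p.support} := by
  refine ⟨y, .cons h p, (p.cons_isCycle_iff h).2 ⟨hp, fun he ↦ ?_⟩, fun s hs ↦ ?_⟩
  · have := hp.length_eq_one_of_mem_edges (Sym2.eq_swap ▸ he)
    omega
  · simpa using Or.inr hs

/-- If the neighbourhoods of the ends of a path cross along the path, its vertex set is cyclable. -/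
lemma Walk.IsPath.isCyclable_of_crossing {x y : V} {p : G.Walk x y} (hp : p.IsPath)
    (hxy : ¬ G.Adj x y) {i : ℕ} (hi : i < p.length) (hx : G.Adj x (p.getVert (i + 1)))
    (hy : G.Adj y (p.getVert i)) : G.IsCyclable {v | v ∈ p.support} := by
  let q : G.Walk x (p.getVert (i + 1)) := (p.take i).append (.cons hy.symm (p.drop (i + 1)).reverse)
  have hq : q.support.Perm p.support := by
    have h1 : q.support = p.support.take (i + 1) ++ (p.support.drop (i + 1)).reverse := by
      simp [q, support_append, support_take, drop_support_eq_support_drop_min]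
      omega
    rw [h1]
    conv_rhs => rw [← List.take_append_drop (i + 1) p.support]
    exact (List.reverse_perm _).append_left _
  have hqp : q.IsPath := by
    rw [isPath_def, hq.nodup_iff]
    exact hp.support_nodup
  have hl : q.length = p.length := by
    have := hq.length_eq
    simpa using this
  have h2 : 2 ≤ p.length := by
    by_contra h
    obtain rfl : i = 0 := by omega
    exact hxy (by simpa using hy.symm)
  exact (hqp.isCyclable (hl ▸ h2) hx.symm).anti fun v hv ↦ hq.mem_iff.2 hv

/-- If the ends of a path are nonadjacent and their degree sum is at least the order of the graph,
the vertex set of the path is cyclable. -/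
lemma Walk.IsPath.isCyclable_of_card_le [Fintype V] {x y : V} {p : G.Walk x y} (hp : p.IsPath)
    (hne : x ≠ y) (hxy : ¬ G.Adj x y)
    (hdeg : Fintype.card V ≤ (G.neighborSet x).ncard + (G.neighborSet y).ncard) :
    G.IsCyclable {v | v ∈ p.support} := by
  classical
  by_contra hcyc
  set A := {i ∈ Finset.range p.length | G.Adj x (p.getVert (i + 1))} with hA
  set B := {i ∈ Finset.range p.length | G.Adj y (p.getVert i)} with hB
  set P := p.support.toFinset with hP
  have hPcard : P.card = p.length + 1 := by
    rw [hP, List.toFinset_card_of_nodup hp.support_nodup, length_support]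
  have hAB : Disjoint A B := by
    rw [Finset.disjoint_left]
    intro i hiA hiB
    rw [hA, Finset.mem_filter, Finset.mem_range] at hiA
    rw [hB, Finset.mem_filter] at hiB
    exact hcyc (hp.isCyclable_of_crossing hxy hiA.1 hiA.2 hiB.2)
  have hABcard : A.card + B.card ≤ p.length := by
    rw [← Finset.card_union_of_disjoint hAB]
    refine (Finset.card_le_card (t := Finset.range p.length) ?_).trans (by simp)
    exact Finset.union_subset (Finset.filter_subset _ _) (Finset.filter_subset _ _)
  set X := (G.neighborSet x).toFinset with hX
  set Y := (G.neighborSet y).toFinset with hY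
  have hXA : (X ∩ P).card ≤ A.card := by
    refine (Finset.card_le_card fun v hv ↦ ?_).trans
      (Finset.card_image_le (s := A) (f := fun i ↦ p.getVert (i + 1)))
    obtain ⟨hv, hvp⟩ := Finset.mem_inter.1 hv
    obtain ⟨j, rfl, hj⟩ := mem_support_iff_exists_getVert.1 (List.mem_toFinset.1 hvp)
    replace hv : G.Adj x (p.getVert j) := by simpa [hX] using hv
    obtain _ | j := j
    · simp at hv
    · exact Finset.mem_image.2 ⟨j, by simpa [hA, hv] using hj, rfl⟩
  have hYB : (Y ∩ P).card ≤ B.card := by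
    refine (Finset.card_le_card fun v hv ↦ ?_).trans
      (Finset.card_image_le (s := B) (f := fun i ↦ p.getVert i))
    obtain ⟨hv, hvp⟩ := Finset.mem_inter.1 hv
    obtain ⟨j, rfl, hj⟩ := mem_support_iff_exists_getVert.1 (List.mem_toFinset.1 hvp)
    replace hv : G.Adj y (p.getVert j) := by simpa [hY] using hv
    refine Finset.mem_image.2 ⟨j, ?_, rfl⟩
    obtain rfl | hj := hj.eq_or_lt
    · simp at hv
    · simpa [hB, hv] using hj
  have hout : Disjoint (X \ P) (Y \ P) := by
    rw [Finset.disjoint_left]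
    intro z hzX hzY
    rw [Finset.mem_sdiff] at hzX hzY
    have hxz : G.Adj x z := by simpa [hX] using hzX.1
    have hyz : G.Adj y z := by simpa [hY] using hzY.1
    have hz : z ∉ p.support := by simpa [hP] using hzX.2
    have hq : (Walk.cons hxz.symm p).IsPath := (cons_isPath_iff _ _).2 ⟨hp, hz⟩
    have hl : p.length ≠ 0 := fun h ↦ hne (eq_of_length_eq_zero h)
    refine hcyc ((hq.isCyclable (by rw [length_cons]; omega) hyz).anti fun v hv ↦ ?_)
    simpa using Or.inr hv
  have houtcard : (X \ P).card + (Y \ P).card ≤ Fintype.card V - P.card := by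
    rw [← Finset.card_union_of_disjoint hout, ← Finset.card_compl]
    exact Finset.card_le_card fun v hv ↦ by
      rw [Finset.mem_compl]
      rcases Finset.mem_union.1 hv with h | h <;> exact (Finset.mem_sdiff.1 h).2
  have h1 := Finset.card_inter_add_card_sdiff X P
  have h2 := Finset.card_inter_add_card_sdiff Y P
  have h3 : P.card ≤ Fintype.card V := Finset.card_le_univ P
  rw [Set.ncard_eq_toFinset_card' (G.neighborSet x), Set.ncard_eq_toFinset_card' (G.neighborSet y),
    ← hX, ← hY] at hdeg
  omega

/-- A cycle of `G ⊔ edge x y` leaving `x` through `y` gives a path of `G` on the same vertices. -/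
lemma exists_isPath_of_isCycle_sup_edge {x y : V} {c : (G ⊔ edge x y).Walk x x} (hc : c.IsCycle)
    (hy : c.snd = y) : ∃ p : G.Walk y x, p.IsPath ∧ ∀ v ∈ c.support, v ∈ p.support := by
  cases c with
  | nil => simp at hc
  | cons h p =>
    obtain rfl : _ = y := by simpa using hy
    obtain ⟨hp, he⟩ := (Walk.cons_isCycle_iff p h).1 hc
    have hE : ∀ e ∈ p.edges, e ∈ G.edgeSet := by
      intro e hep
      have := p.edges_subset_edgeSet hep
      rw [edgeSet_sup] at this
      refine this.resolve_right fun h ↦ he ?_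
      rwa [← Set.mem_singleton_iff.1 (edgeSet_edge_subset h)]
    refine ⟨p.transfer G hE, hp.transfer hE, fun v hv ↦ ?_⟩
    rw [Walk.support_transfer]
    rw [Walk.support_cons, List.mem_cons] at hv
    rcases hv with rfl | hv
    · exact p.end_mem_support
    · exact hv

/-- Adding an edge between two nonadjacent vertices of degree sum at least the order of the graph
does not create new cyclable sets. -/
lemma IsCyclable.of_sup_edge [Fintype V] {S : Set V} {x y : V} (hne : x ≠ y) (hxy : ¬ G.Adj x y)
    (hdeg : Fintype.card V ≤ (G.neighborSet x).ncard + (G.neighborSet y).ncard)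
    (h : (G ⊔ edge x y).IsCyclable S) : G.IsCyclable S := by
  classical
  obtain ⟨v, c, hc, hS⟩ := h
  by_cases he : s(x, y) ∈ c.edges
  · obtain ⟨c', hc', hsnd, hS'⟩ : ∃ c' : (G ⊔ edge x y).Walk x x, c'.IsCycle ∧ c'.snd = y ∧
        ∀ s ∈ S, s ∈ c'.support := by
      have hx := c.fst_mem_support_of_mem_edges he
      have hr : (c.rotate x hx).IsCycle := hc.rotate hx
      have her : s(x, y) ∈ (c.rotate x hx).edges := (c.rotate_edges x hx).mem_iff.2 he
      have hSr : ∀ s ∈ S, s ∈ (c.rotate x hx).support := fun s hs ↦ by simpa using hS s hs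
      generalize c.rotate x hx = d at hr her hSr
      by_cases hd : d.snd = y
      · exact ⟨d, hr, hd, hSr⟩
      refine ⟨d.reverse, hr.reverse, ?_, by simpa using hSr⟩
      rw [Walk.snd_reverse]
      cases d with
      | nil => simp at hr
      | cons h p =>
        rw [Walk.edges_cons, List.mem_cons] at her
        have hp := ((Walk.cons_isCycle_iff p h).1 hr).1
        rcases her with her | her
        · exact absurd (by simpa using (Sym2.congr_right.1 her).symm) hd
        · have hp0 : ¬ p.Nil := Walk.not_nil_of_isCycle_cons hr
          rw [Walk.penultimate_cons_of_not_nil _ _ hp0]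
          exact (hp.eq_penultimate_of_mem_edges her).symm
    obtain ⟨p, hp, hpS⟩ := exists_isPath_of_isCycle_sup_edge hc' hsnd
    exact (hp.isCyclable_of_card_le hne.symm (fun h ↦ hxy h.symm) (by omega)).anti
      fun s hs ↦ hpS s (hS' s hs)
  · have hE : ∀ e ∈ c.edges, e ∈ G.edgeSet := by
      intro e hec
      have := c.edges_subset_edgeSet hec
      rw [edgeSet_sup] at this
      refine this.resolve_right fun h ↦ he ?_
      rwa [← Set.mem_singleton_iff.1 (edgeSet_edge_subset h)]
    exact ⟨v, c.transfer G hE, hc.transfer hE, by simpa using hS⟩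

lemma IsClique.isCyclable {T : Finset V} (hT : G.IsClique (T : Set V)) (h3 : 3 ≤ T.card) :
    G.IsCyclable (T : Set V) := by
  have hne : T.toList ≠ [] := by
    rw [Ne, Finset.toList_eq_nil]
    rintro rfl
    simp at h3
  have hch : T.toList.IsChain G.Adj := by
    refine List.Pairwise.isChain ?_
    exact T.nodup_toList.imp_of_mem fun ha hb hab ↦
      hT (Finset.mem_toList.1 ha) (Finset.mem_toList.1 hb) hab
  have hp : (Walk.ofSupport T.toList hne hch).IsPath := by
    rw [Walk.isPath_def, Walk.support_ofSupport]
    exact T.nodup_toList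
  have hl : 2 ≤ (Walk.ofSupport T.toList hne hch).length := by
    rw [Walk.length_ofSupport, Finset.length_toList]
    omega
  refine (hp.isCyclable hl (hT ?_ ?_ fun h ↦ ?_)).anti fun v hv ↦ ?_
  · exact Finset.mem_toList.1 (List.getLast_mem hne)
  · exact Finset.mem_toList.1 (List.head_mem hne)
  · have := (hp.getVert_eq_start_iff le_rfl).1 ((Walk.getVert_length _).trans h)
    omega
  · simpa using hv

/-- The degree-sum condition makes every set of at least three vertices cyclable, with no
connectivity assumption. -/
lemma isCyclable_of_three_le_card [Fintype V] (G : SimpleGraph V) {T : Finset V} (h3 : 3 ≤ T.card)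
    (hdeg : ∀ x ∈ T, ∀ y ∈ T, x ≠ y → ¬ G.Adj x y →
      Fintype.card V ≤ (G.neighborSet x).ncard + (G.neighborSet y).ncard) :
    G.IsCyclable (T : Set V) := by
  induction G using WellFoundedGT.induction with
  | ind G ih =>
    by_cases hT : G.IsClique (T : Set V)
    · exact hT.isCyclable h3
    obtain ⟨x, hx, y, hy, hne, hxy⟩ : ∃ x ∈ T, ∃ y ∈ T, x ≠ y ∧ ¬ G.Adj x y := by
      by_contra! h
      exact hT fun x hx y hy hne ↦ h x hx y hy hne
    refine .of_sup_edge hne hxy (hdeg x hx y hy hne hxy) (ih _ (G.lt_sup_edge x y hne hxy) ?_)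
    intro a ha b hb hab hadj
    have hmono (z : V) : (G.neighborSet z).ncard ≤ ((G ⊔ edge x y).neighborSet z).ncard :=
      Set.ncard_le_ncard (fun w hw ↦ (le_sup_left : G ≤ G ⊔ edge x y) hw) (Set.toFinite _)
    exact (hdeg a ha b hb hab fun h ↦ hadj (Or.inl h)).trans (add_le_add (hmono a) (hmono b))

/-- In a graph without cut vertices, the ends of every edge lie on a common cycle. -/
lemma Adj.isCyclable_pair [Fintype V] {x y : V} (h : G.Adj x y) (h3 : 3 ≤ Fintype.card V)
    (hconn : ∀ w : V, (G.induce ({w}ᶜ : Set V)).Connected) : G.IsCyclable {x, y} := by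
  classical
  obtain ⟨w, hxw, hwy⟩ : ∃ w, G.Adj x w ∧ w ≠ y := by
    obtain ⟨z, hz⟩ : ∃ z, z ∉ ({x, y} : Finset V) := by
      by_contra! hall
      have := Finset.card_le_card (fun z _ ↦ hall z : (Finset.univ : Finset V) ⊆ {x, y})
      have := Finset.card_le_two (a := x) (b := y)
      rw [Finset.card_univ] at *
      omega
    simp only [Finset.mem_insert, Finset.mem_singleton, not_or] at hz
    obtain ⟨p⟩ := (hconn y).preconnected ⟨x, h.ne⟩ ⟨z, hz.2⟩
    cases p with
    | nil => exact absurd rfl hz.1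
    | @cons _ u _ hadj _ => exact ⟨u.1, hadj, u.2⟩
  obtain ⟨p, hp⟩ := ((hconn x).preconnected ⟨w, hxw.ne'⟩ ⟨y, h.ne'⟩).exists_isPath
  let q : G.Walk w y := p.map (Embedding.induce _).toHom
  have hq : q.IsPath := hp.map (Embedding.induce (G := G) _).injective
  have hxq : x ∉ q.support := by
    intro hx
    obtain ⟨⟨u, hu⟩, -, hux⟩ := List.mem_map.1 (Walk.support_map _ p ▸ hx)
    exact hu hux
  have hr : (Walk.cons hxw q).IsPath := (Walk.cons_isPath_iff _ _).2 ⟨hq, hxq⟩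
  have hl : q.length ≠ 0 := fun h ↦ hwy (Walk.eq_of_length_eq_zero h)
  refine (hr.isCyclable (by rw [Walk.length_cons]; omega) h.symm).anti ?_
  rintro v (rfl | rfl)
  · exact Walk.start_mem_support _
  · exact Walk.end_mem_support _

/-- Two distinct nonadjacent vertices with degree sum at least the order lie on a 4-cycle. -/
lemma isCyclable_pair_of_not_adj [Fintype V] {x y : V} (hne : x ≠ y) (hxy : ¬ G.Adj x y)
    (hdeg : Fintype.card V ≤ (G.neighborSet x).ncard + (G.neighborSet y).ncard) :
    G.IsCyclable {x, y} := by
  have hsub : G.neighborSet x ∪ G.neighborSet y ⊆ ({x, y} : Set V)ᶜ := by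
    rintro v hv (rfl | rfl)
    · rcases hv with hv | hv
      · exact G.irrefl hv
      · exact hxy (Adj.symm hv)
    · rcases hv with hv | hv
      · exact hxy hv
      · exact G.irrefl hv
  have h1 := Set.ncard_le_ncard hsub (Set.toFinite _)
  have h2 := Set.ncard_union_add_ncard_inter (G.neighborSet x) (G.neighborSet y)
  have h3 := Set.ncard_add_ncard_compl ({x, y} : Set V)
  rw [Set.ncard_pair hne, Nat.card_eq_fintype_card] at h3
  obtain ⟨a, b, ha, hb, hab⟩ := (Set.one_lt_ncard_iff (Set.toFinite _)).1
    (show 1 < (G.neighborSet x ∩ G.neighborSet y).ncard by omega)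
  obtain ⟨hxa, hya⟩ : G.Adj x a ∧ G.Adj y a := ha
  obtain ⟨hxb, hyb⟩ : G.Adj x b ∧ G.Adj y b := hb
  have hp : (Walk.cons hxa (.cons hya.symm (.cons hyb .nil))).IsPath := by
    simp [Walk.isPath_def, hxa.ne, hxb.ne, hne, hya.ne', hyb.ne, hab]
  refine (hp.isCyclable (by simp) hxb.symm).anti ?_
  rintro v (rfl | rfl) <;> simp

end SimpleGraph

/-- Theorem B, Shi. -/
theorem shi_cyclable_of_degree_sums {W : Type*} [Fintype W]
    (G : SimpleGraph W) [DecidableRel G.Adj]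
    (h2conn : 3 ≤ Fintype.card W ∧
      ∀ w : W, (G.induce ({w}ᶜ : Set W)).Connected)
    (S : Set W)
    (hdeg : ∀ x ∈ S, ∀ y ∈ S, x ≠ y → ¬ G.Adj x y →
      G.degree x + G.degree y ≥ Fintype.card W) :
    ∃ (v : W) (c : G.Walk v v), c.IsCycle ∧ ∀ s ∈ S, s ∈ c.support := by
  classical
  obtain ⟨h3, hconn⟩ := h2conn
  have hdeg' : ∀ x ∈ S.toFinset, ∀ y ∈ S.toFinset, x ≠ y → ¬ G.Adj x y →
      Fintype.card W ≤ (G.neighborSet x).ncard + (G.neighborSet y).ncard := by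
    intro x hx y hy hne hxy
    have hcard (z : W) : (G.neighborSet z).ncard = G.degree z := by
      rw [Set.ncard_eq_toFinset_card', Set.toFinset_card, G.card_neighborSet_eq_degree]
    rw [hcard, hcard]
    exact hdeg x (Set.mem_toFinset.1 hx) y (Set.mem_toFinset.1 hy) hne hxy
  suffices h : G.IsCyclable (S.toFinset : Set W) by
    rwa [Set.coe_toFinset] at h
  by_cases hS : 3 ≤ S.toFinset.card
  · exact G.isCyclable_of_three_le_card hS hdeg'
  have hpair : ∀ x ∈ S.toFinset, ∀ y ∈ S.toFinset, x ≠ y → G.IsCyclable {x, y} := by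
    intro x hx y hy hne
    by_cases hxy : G.Adj x y
    · exact hxy.isCyclable_pair h3 hconn
    · exact SimpleGraph.isCyclable_pair_of_not_adj hne hxy (hdeg' x hx y hy hne hxy)
  by_cases hS2 : S.toFinset.card = 2
  · obtain ⟨x, y, hne, hxy⟩ := Finset.card_eq_two.1 hS2
    rw [hxy] at hpair ⊢
    simpa using hpair x (by simp) y (by simp) hne
  have hW : Nonempty W := Fintype.card_pos_iff.1 (by omega)
  obtain ⟨x, hx⟩ := Finset.card_le_one_iff_subset_singleton.1
    (show S.toFinset.card ≤ 1 by omega)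
  obtain ⟨y, hxy⟩ : ∃ y, G.Adj x y := by
    obtain ⟨a, b, hxa, hxb, hab⟩ : ∃ a b, x ≠ a ∧ x ≠ b ∧ a ≠ b := by
      obtain ⟨a, ha, b, hb, hab⟩ := Finset.one_lt_card.1
        (show 1 < (Finset.univ.erase x).card by
          rw [Finset.card_erase_of_mem (Finset.mem_univ x), Finset.card_univ]
          omega)
      exact ⟨a, b, (Finset.ne_of_mem_erase ha).symm, (Finset.ne_of_mem_erase hb).symm, hab⟩
    obtain ⟨p⟩ := (hconn a).preconnected ⟨x, hxa⟩ ⟨b, hab.symm⟩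
    cases p with
    | nil => exact absurd rfl hxb
    | cons hadj _ => exact ⟨_, hadj⟩
  exact (hxy.isCyclable_pair h3 hconn).anti fun v hv ↦
    Or.inl (Finset.mem_singleton.1 (hx hv))
end
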